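/- arXiv:2103.00240 — 2 statements merged into one kernel-verified Lean document; each statement's English description precedes it below -/
import Mathlib

section
/- (Finite-time blow-down for p < 1, γ < 0.) Let l > 0, γ < 0 and p < 1; write p = 1 - ε with ε > 0. Let u₀ > 0 be a smooth function on [-l,l] with ∂ₓₓ log u₀ < 0 satisfying the compatibility condition, and let u be a positive classical solution of the 1D logarithmic diffusion problem on [-l,l] × [0,T) with initial data u₀. Then the mass m(t) = ∫_{-l}^{l} u(x,t) dx satisfies m(t)^{1+ε} ≤ m(0)^{1+ε} + α t for all t ∈ [0,T), where α = 2γ(1+ε)(2l)^{ε} < 0. In particular T ≤ -m(0)^{1+ε}/α < ∞: the solution blows down in finite time and cannot be extended as a positive classical solution beyond time -m(0)^{1+ε}/α. -/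
/-!
The flux through the boundary gives the mass balance `m' = 2γ (u(l,t)^{-ε} + u(-l,t)^{-ε})`
(`RegSol.mass_hasDerivAt`). If the average `m / 2l` is at least the smaller boundary value of
`u(·,t)`, this yields `(m^{1+ε})' ≤ 2γ(1+ε)(2l)^ε = α`, hence the estimate (`RegSol.mass_le`); and
since the mass of a positive solution is positive, the solution cannot reach the time at which the
right-hand side vanishes.

The average bound follows from concavity of `log u(·,t)`, i.e. from `∂ₜu ≤ 0`
(`RegSol.v_nonpos`). A `C²` solution is not smooth enough to apply the maximum principle to `∂ₜu`
itself, so `u` is compared with its time shifts instead: log-concavity of `u₀` gives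
`∂ₜu(·,0) < 0`, hence `u(·,h) < u(·,0)` for small `h > 0`, and this order persists
(`RegSol.shift_lt`), so that `u(·,t+h) < u(·,t)` for all `t`.

The hypotheses use two-sided derivatives at `x = ±l`, which depend on values outside `[-l,l]`.
These derivatives are nonzero, so they exist and agree with the one-sided ones
(`bdry_eq`, `RegSol.v_zero_neg`).
-/

/- STATEMENT 17: Finite-time blow-down for p = 1 - ε < 1, γ < 0: the mass
m(t) = ∫_{-l}^{l} u(x,t) dx satisfies m(t)^{1+ε} ≤ m(0)^{1+ε} + αt with
α = 2γ(1+ε)(2l)^ε < 0, so T ≤ -m(0)^{1+ε}/α. -/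

open Set Real

/-- `u` is a positive classical solution on `[-l,l] × [0,T)` of
`∂ₜu = ∂ₓₓ log u` with boundary conditions `∂ₓu(±l,t) = ±2γ u(±l,t)^p` and initial data `u₀`. -/
def IsLogDiffSol (l γ p T : ℝ) (u₀ : ℝ → ℝ) (u : ℝ → ℝ → ℝ) : Prop :=
  ContDiffOn ℝ 2 (fun q : ℝ × ℝ => u q.1 q.2) (Icc (-l) l ×ˢ Ico 0 T) ∧
  (∀ x ∈ Icc (-l) l, ∀ t ∈ Ico (0:ℝ) T, 0 < u x t) ∧
  (∀ x ∈ Icc (-l) l, ∀ t ∈ Ioo (0:ℝ) T,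
    deriv (u x) t = deriv (deriv (fun y => Real.log (u y t))) x) ∧
  (∀ t ∈ Ioo (0:ℝ) T, deriv (fun y => u y t) l = 2 * γ * u l t ^ p) ∧
  (∀ t ∈ Ioo (0:ℝ) T, deriv (fun y => u y t) (-l) = -(2 * γ * u (-l) t ^ p)) ∧
  (∀ x ∈ Icc (-l) l, u x 0 = u₀ x)

/-- `u` is a global (`T = ∞`) positive classical solution on `[-l,l] × [0,∞)`. -/
def IsLogDiffSolGlobal (l γ p : ℝ) (u₀ : ℝ → ℝ) (u : ℝ → ℝ → ℝ) : Prop :=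
  ContDiffOn ℝ 2 (fun q : ℝ × ℝ => u q.1 q.2) (Icc (-l) l ×ˢ Ici 0) ∧
  (∀ x ∈ Icc (-l) l, ∀ t ∈ Ici (0:ℝ), 0 < u x t) ∧
  (∀ x ∈ Icc (-l) l, ∀ t ∈ Ioi (0:ℝ),
    deriv (u x) t = deriv (deriv (fun y => Real.log (u y t))) x) ∧
  (∀ t ∈ Ioi (0:ℝ), deriv (fun y => u y t) l = 2 * γ * u l t ^ p) ∧
  (∀ t ∈ Ioi (0:ℝ), deriv (fun y => u y t) (-l) = -(2 * γ * u (-l) t ^ p)) ∧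
  (∀ x ∈ Icc (-l) l, u x 0 = u₀ x)

/-- The compatibility condition `∂ₓ log u₀(±l) = ±2γ u₀(±l)^{p-1}`. -/
def CompatCond (l γ p : ℝ) (u₀ : ℝ → ℝ) : Prop :=
  deriv (fun x => Real.log (u₀ x)) l = 2 * γ * u₀ l ^ (p - 1) ∧
  deriv (fun x => Real.log (u₀ x)) (-l) = -(2 * γ * u₀ (-l) ^ (p - 1))

/-- `u_min(t) = min_{x ∈ [-l,l]} u(x,t)`. -/
noncomputable def uMin (l : ℝ) (u : ℝ → ℝ → ℝ) (t : ℝ) : ℝ :=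
  sInf ((fun x => u x t) '' Icc (-l) l)

/-- `u_max(t) = max_{x ∈ [-l,l]} u(x,t)`. -/
noncomputable def uMax (l : ℝ) (u : ℝ → ℝ → ℝ) (t : ℝ) : ℝ :=
  sSup ((fun x => u x t) '' Icc (-l) l)

open Filter Topology MeasureTheory

/-! ### Necessary conditions at a minimum -/

lemma nonneg_of_hasDerivWithinAt_right {f : ℝ → ℝ} {d a : ℝ} {s : Set ℝ}
    (h : HasDerivWithinAt f d s a) (hs : s ∈ 𝓝[>] a) (hf : ∀ᶠ y in 𝓝[>] a, f a ≤ f y) :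
    0 ≤ d := by
  have h1 : HasDerivWithinAt f d (Ioi a) a := h.mono_of_mem_nhdsWithin hs
  rw [hasDerivWithinAt_iff_tendsto_slope' (by simp)] at h1
  refine ge_of_tendsto h1 ?_
  filter_upwards [hf, self_mem_nhdsWithin] with y hy hay
  rw [slope_def_field]
  exact div_nonneg (by linarith) (by have : a < y := hay; linarith)

lemma nonpos_of_hasDerivWithinAt_left {f : ℝ → ℝ} {d a : ℝ} {s : Set ℝ}
    (h : HasDerivWithinAt f d s a) (hs : s ∈ 𝓝[<] a) (hf : ∀ᶠ y in 𝓝[<] a, f a ≤ f y) :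
    d ≤ 0 := by
  have h1 : HasDerivWithinAt f d (Iio a) a := h.mono_of_mem_nhdsWithin hs
  rw [hasDerivWithinAt_iff_tendsto_slope' (by simp)] at h1
  refine le_of_tendsto h1 ?_
  filter_upwards [hf, self_mem_nhdsWithin] with y hy hay
  rw [slope_def_field]
  exact div_nonpos_of_nonneg_of_nonpos (by linarith) (by have : y < a := hay; linarith)

/-- The second-order necessary condition at an interior minimum. -/
lemma second_deriv_nonneg_of_min {f g : ℝ → ℝ} {d a b x₀ : ℝ} (hx : x₀ ∈ Ioo a b)
    (hf : ∀ x ∈ Ioo a b, HasDerivAt f (g x) x) (hg : HasDerivAt g d x₀)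
    (hmin : ∀ x ∈ Ioo a b, f x₀ ≤ f x) : 0 ≤ d := by
  by_contra! hd
  have hnb : Ioo a b ∈ 𝓝 x₀ := Ioo_mem_nhds hx.1 hx.2
  have hfg : deriv f =ᶠ[𝓝 x₀] g := by
    filter_upwards [hnb] with x hx using (hf x hx).deriv
  have hdd : deriv (deriv f) x₀ = d := by rw [hfg.deriv_eq, hg.deriv]
  have hlm : IsLocalMin f x₀ := by
    filter_upwards [hnb] with x hx using hmin x hx
  have hlM : IsLocalMax f x₀ :=
    isLocalMax_of_deriv_deriv_neg (by rw [hdd]; exact hd) hlm.deriv_eq_zero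
      (hf x₀ hx).continuousAt
  -- A point that is both a local minimum and a local maximum makes `f` locally constant.
  have hconst : f =ᶠ[𝓝 x₀] fun _ => f x₀ := by
    filter_upwards [hlm, hlM] with x h1 h2 using le_antisymm h2 h1
  have h0 : deriv (deriv f) x₀ = 0 := by
    rw [hconst.deriv.deriv_eq]; simp
  linarith

/-! ### Comparison with time shifts -/

/-- A classical solution together with its one-sided partial derivatives up to the boundary:
`A = ∂ₓ log u` and `v = ∂ₜ u = ∂ₓₓ log u`, where `v` is continuous on the whole of
`[-l,l] × [0,T)`. Unlike the two-sided `deriv`, these only see the values of `u` on that set. -/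
structure RegSol (l γ ε T : ℝ) (u v A : ℝ → ℝ → ℝ) : Prop where
  cu : ContinuousOn (fun q : ℝ × ℝ => u q.1 q.2) (Icc (-l) l ×ˢ Ico 0 T)
  cv : ContinuousOn (fun q : ℝ × ℝ => v q.1 q.2) (Icc (-l) l ×ˢ Ico 0 T)
  pos : ∀ x ∈ Icc (-l) l, ∀ t ∈ Ico (0:ℝ) T, 0 < u x t
  hA : ∀ x ∈ Icc (-l) l, ∀ t ∈ Ico (0:ℝ) T,
    HasDerivWithinAt (fun y => Real.log (u y t)) (A x t) (Icc (-l) l) x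
  hv : ∀ x ∈ Icc (-l) l, ∀ t ∈ Ico (0:ℝ) T,
    HasDerivWithinAt (fun y => A y t) (v x t) (Icc (-l) l) x
  ht : ∀ x ∈ Icc (-l) l, ∀ t ∈ Ico (0:ℝ) T,
    HasDerivWithinAt (u x) (v x t) (Ico 0 T) t
  br : ∀ t ∈ Ioo (0:ℝ) T, A l t = 2 * γ * u l t ^ (-ε)
  bl : ∀ t ∈ Ioo (0:ℝ) T, A (-l) t = -(2 * γ * u (-l) t ^ (-ε))

/-- Comparison of the solution with its time shift by `h`: if the shifted solution starts
strictly below, it stays strictly below. At the first time when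
`D = log u(·,t) - log u(·,t+h)` touches `δ e^{-Kt}`, the Robin condition (with `γ < 0`) excludes
a boundary minimum and the equation, with `K` large, excludes an interior one. -/
lemma RegSol.shift_lt {l γ ε T : ℝ} {u v A : ℝ → ℝ → ℝ} (R : RegSol l γ ε T u v A)
    (hl : 0 < l) (hγ : γ < 0) (hε : 0 < ε) {h τ : ℝ} (hh : 0 < h) (hτ0 : 0 ≤ τ) (hτ : τ + h < T)
    (hstart : ∀ x ∈ Icc (-l) l, u x h < u x 0) :
    ∀ x ∈ Icc (-l) l, u x (τ + h) < u x τ := by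
  have hne : (Icc (-l) l).Nonempty := ⟨0, by constructor <;> linarith⟩
  have mem1 : ∀ t ∈ Icc 0 τ, t ∈ Ico 0 T := fun t ht => ⟨ht.1, by linarith [ht.2]⟩
  have mem2 : ∀ t ∈ Icc 0 τ, t + h ∈ Ico 0 T := fun t ht =>
    ⟨by linarith [ht.1], by linarith [ht.2]⟩
  set D : ℝ → ℝ → ℝ := fun x t => Real.log (u x t) - Real.log (u x (t + h)) with hD
  have cu1 : ContinuousOn (fun q : ℝ × ℝ => u q.1 q.2) (Icc (-l) l ×ˢ Icc 0 τ) :=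
    R.cu.mono (prod_mono_right mem1)
  have cu2 : ContinuousOn (fun q : ℝ × ℝ => u q.1 (q.2 + h)) (Icc (-l) l ×ˢ Icc 0 τ) :=
    R.cu.comp (f := fun q : ℝ × ℝ => (q.1, q.2 + h)) (by fun_prop)
      (fun q hq => ⟨hq.1, mem2 _ hq.2⟩)
  have cD : ContinuousOn (fun q : ℝ × ℝ => D q.1 q.2) (Icc (-l) l ×ˢ Icc 0 τ) :=
    (cu1.log fun q hq => (R.pos _ hq.1 _ (mem1 _ hq.2)).ne').sub
      (cu2.log fun q hq => (R.pos _ hq.1 _ (mem2 _ hq.2)).ne')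
  have hcomp : IsCompact (Icc (-l) l ×ˢ Icc 0 τ) := isCompact_Icc.prod isCompact_Icc
  have hcne : (Icc (-l) l ×ˢ Icc 0 τ).Nonempty := hne.prod ⟨0, le_refl _, hτ0⟩
  obtain ⟨M, hM⟩ := hcomp.exists_bound_of_continuousOn
    (R.cv.mono (prod_mono_right mem1))
  have hM0 : 0 ≤ M := by
    obtain ⟨q, hq⟩ := hcne
    exact (norm_nonneg _).trans (hM q hq)
  obtain ⟨q₁, hq₁, hmin₁⟩ := hcomp.exists_isMinOn hcne cu2
  set μ := u q₁.1 (q₁.2 + h) with hμ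
  have hμ0 : 0 < μ := R.pos _ hq₁.1 _ (mem2 _ hq₁.2)
  set K := M / μ + 1 with hK
  -- `2δ` is the minimum of `D` at time `0`.
  have h00 : (0:ℝ) ∈ Icc 0 τ := ⟨le_refl _, hτ0⟩
  have cD0 : ContinuousOn (fun x => D x 0) (Icc (-l) l) :=
    cD.comp (f := fun x : ℝ => (x, (0:ℝ))) (by fun_prop) (fun x hx => ⟨hx, h00⟩)
  obtain ⟨x₁, hx₁, hxmin⟩ := isCompact_Icc.exists_isMinOn hne cD0
  have hD1 : 0 < D x₁ 0 := by
    simp only [hD, zero_add]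
    have := Real.log_lt_log (by simpa using R.pos _ hx₁ _ (mem2 0 h00)) (hstart x₁ hx₁)
    linarith
  set δ := D x₁ 0 / 2 with hδ
  have hδ0 : 0 < δ := by positivity
  set F : ℝ × ℝ → ℝ := fun q => D q.1 q.2 * Real.exp (K * q.2) with hF
  have cF : ContinuousOn F (Icc (-l) l ×ˢ Icc 0 τ) := cD.mul (by fun_prop)
  have key : ∀ q ∈ Icc (-l) l ×ˢ Icc 0 τ, δ < F q := by
    by_contra! hcon
    obtain ⟨q', hq', hFq'⟩ := hcon
    -- `C` is the set where the barrier has been reached; `(x₀,t₀)` is a point of least time.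
    set C := (Icc (-l) l ×ˢ Icc 0 τ) ∩ F ⁻¹' Iic δ with hC
    have hCc : IsCompact C :=
      hcomp.of_isClosed_subset
        (cF.preimage_isClosed_of_isClosed hcomp.isClosed isClosed_Iic) inter_subset_left
    obtain ⟨⟨x₀, t₀⟩, ⟨⟨hx₀, ht₀⟩, hFle⟩, hmin⟩ :=
      hCc.exists_isMinOn ⟨q', hq', hFq'⟩ (continuous_snd.continuousOn)
    simp only at hx₀ ht₀
    have hFle' : F (x₀, t₀) ≤ δ := hFle
    have hbefore : ∀ x ∈ Icc (-l) l, ∀ t ∈ Ico 0 t₀, δ < F (x, t) := by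
      intro x hx t ht
      by_contra! hle
      have h1 : ((x, t) : ℝ × ℝ) ∈ C := ⟨⟨hx, ht.1, by linarith [ht.2, ht₀.2]⟩, hle⟩
      have h2 := hmin h1
      simp only [mem_ofPred_eq] at h2
      linarith [ht.2]
    have ht0pos : 0 < t₀ := by
      rcases ht₀.1.eq_or_lt with h0 | h0
      · exfalso
        rw [← h0] at hFle'
        have h3 : D x₁ 0 ≤ D x₀ 0 := hxmin hx₀
        simp only [hF, mul_zero, Real.exp_zero, mul_one] at hFle'
        linarith
      · exact h0
    have hat : ∀ x ∈ Icc (-l) l, δ ≤ F (x, t₀) := by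
      intro x hx
      have c1 : ContinuousOn (fun t => F (x, t)) (Icc 0 τ) :=
        cF.comp (f := fun t : ℝ => (x, t)) (by fun_prop) (fun t ht => ⟨hx, ht⟩)
      have c2 : Tendsto (fun t => F (x, t)) (𝓝[<] t₀) (𝓝 (F (x, t₀))) :=
        (c1 t₀ ht₀).mono_of_mem_nhdsWithin
          (mem_of_superset (Ioo_mem_nhdsLT ht0pos) fun t ht => ⟨ht.1.le, ht.2.le.trans ht₀.2⟩)
      refine ge_of_tendsto c2 ?_
      filter_upwards [Ioo_mem_nhdsLT ht0pos] with t ht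
      exact (hbefore x hx t ⟨ht.1.le, ht.2⟩).le
    have hFeq : F (x₀, t₀) = δ := le_antisymm hFle' (hat x₀ hx₀)
    have hexp : 0 < Real.exp (K * t₀) := Real.exp_pos _
    have hDmin : ∀ x ∈ Icc (-l) l, D x₀ t₀ ≤ D x t₀ := by
      intro x hx
      have h1 : D x₀ t₀ * Real.exp (K * t₀) ≤ D x t₀ * Real.exp (K * t₀) :=
        hFeq.le.trans (hat x hx)
      exact le_of_mul_le_mul_right h1 hexp
    have hD0 : 0 < D x₀ t₀ := by
      have : 0 < D x₀ t₀ * Real.exp (K * t₀) := by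
        have : F (x₀, t₀) = D x₀ t₀ * Real.exp (K * t₀) := rfl
        linarith
      exact pos_of_mul_pos_left this hexp.le
    have m1 := mem1 t₀ ht₀
    have m2 := mem2 t₀ ht₀
    have hu1 := R.pos x₀ hx₀ t₀ m1
    have hu2 := R.pos x₀ hx₀ _ m2
    have hult : u x₀ (t₀ + h) < u x₀ t₀ :=
      (Real.log_lt_log_iff hu2 hu1).1 (by simp only [hD] at hD0; linarith)
    have hDx : ∀ x ∈ Icc (-l) l,
        HasDerivWithinAt (fun y => D y t₀) (A x t₀ - A x (t₀ + h)) (Icc (-l) l) x :=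
      fun x hx => (R.hA x hx t₀ m1).sub (R.hA x hx _ m2)
    have hpow : u x₀ t₀ ^ (-ε) < u x₀ (t₀ + h) ^ (-ε) :=
      Real.rpow_lt_rpow_of_neg hu2 hult (by linarith)
    have o1 : t₀ ∈ Ioo 0 T := ⟨ht0pos, m1.2⟩
    have o2 : t₀ + h ∈ Ioo 0 T := ⟨by linarith, m2.2⟩
    rcases hx₀.1.eq_or_lt with hxl | hxl
    · subst hxl
      have := nonneg_of_hasDerivWithinAt_right (hDx _ hx₀)
        (Icc_mem_nhdsGT (by linarith)) (by
          filter_upwards [Icc_mem_nhdsGT (show -l < l by linarith)] with y hy using hDmin y hy)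
      rw [R.bl _ o1, R.bl _ o2] at this
      nlinarith
    rcases hx₀.2.eq_or_lt with hxr | hxr
    · subst hxr
      have := nonpos_of_hasDerivWithinAt_left (hDx _ hx₀)
        (Icc_mem_nhdsLT (by linarith)) (by
          filter_upwards [Icc_mem_nhdsLT (show -x₀ < x₀ by linarith)] with y hy using hDmin y hy)
      rw [R.br _ o1, R.br _ o2] at this
      nlinarith
    have hnb : Icc (-l) l ∈ 𝓝 x₀ := Icc_mem_nhds hxl hxr
    have hvv : 0 ≤ v x₀ t₀ - v x₀ (t₀ + h) := by
      refine second_deriv_nonneg_of_min (f := fun y => D y t₀)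
        (g := fun y => A y t₀ - A y (t₀ + h)) ⟨hxl, hxr⟩ ?_ ?_ ?_
      · intro x hx
        exact (hDx x (Ioo_subset_Icc_self hx)).hasDerivAt (Icc_mem_nhds hx.1 hx.2)
      · exact ((R.hv x₀ hx₀ t₀ m1).sub (R.hv x₀ hx₀ _ m2)).hasDerivAt hnb
      · exact fun x hx => hDmin x (Ioo_subset_Icc_self hx)
    have d1 : HasDerivAt (u x₀) (v x₀ t₀) t₀ :=
      (R.ht x₀ hx₀ t₀ m1).hasDerivAt (Ico_mem_nhds o1.1 o1.2)
    have d2 : HasDerivAt (fun s => u x₀ (s + h)) (v x₀ (t₀ + h)) t₀ :=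
      ((R.ht x₀ hx₀ _ m2).hasDerivAt (Ico_mem_nhds o2.1 o2.2)).comp_add_const t₀ h
    have dF := ((d1.log hu1.ne').sub (d2.log hu2.ne')).mul
      (((hasDerivAt_id t₀).const_mul K).exp)
    have hle := nonpos_of_hasDerivWithinAt_left (dF.hasDerivWithinAt (s := univ)) univ_mem (by
      filter_upwards [Ioo_mem_nhdsLT ht0pos] with t ht
      exact hFeq.le.trans (hbefore x₀ hx₀ t ⟨ht.1.le, ht.2⟩).le)
    have hle2 : (v x₀ t₀ / u x₀ t₀ - v x₀ (t₀ + h) / u x₀ (t₀ + h)) + K * D x₀ t₀ ≤ 0 := by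
      refine nonpos_of_mul_nonpos_left (b := Real.exp (K * t₀)) ?_ hexp
      simp only [hD]
      simp only [Pi.sub_apply, id] at hle
      linarith
    -- `1/u₂ - 1/u₁ ≤ D / u₂`, from `1 - 1/r ≤ log r` with `r = u₁/u₂`.
    have hDlog : D x₀ t₀ = Real.log (u x₀ t₀ / u x₀ (t₀ + h)) :=
      (Real.log_div hu1.ne' hu2.ne').symm
    have hlog := Real.one_sub_inv_le_log_of_pos (div_pos hu1 hu2)
    rw [← hDlog, inv_div] at hlog
    have hMv : |v x₀ t₀| ≤ M := hM (x₀, t₀) ⟨hx₀, ht₀⟩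
    have hμle : μ ≤ u x₀ (t₀ + h) := hmin₁ (show (x₀, t₀) ∈ _ from ⟨hx₀, ht₀⟩)
    set a := u x₀ t₀
    set b := u x₀ (t₀ + h)
    have e1 : v x₀ t₀ / a - v x₀ (t₀ + h) / b
        = (v x₀ t₀ - v x₀ (t₀ + h)) / b - v x₀ t₀ * ((1 - b / a) / b) := by
      field_simp; ring
    have e2 : 0 ≤ (v x₀ t₀ - v x₀ (t₀ + h)) / b := div_nonneg hvv hu2.le
    have e3 : 0 ≤ 1 - b / a := by
      have : b / a ≤ 1 := (div_le_one hu1).2 hult.le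
      linarith
    have e4 : (1 - b / a) / b ≤ D x₀ t₀ / μ := div_le_div₀ hD0.le hlog hμ0 hμle
    have e5 : v x₀ t₀ * ((1 - b / a) / b) ≤ M * (D x₀ t₀ / μ) :=
      mul_le_mul ((le_abs_self _).trans hMv) e4 (div_nonneg e3 hu2.le) hM0
    have e6 : M * (D x₀ t₀ / μ) = M / μ * D x₀ t₀ := by ring
    have e7 : K * D x₀ t₀ = M / μ * D x₀ t₀ + D x₀ t₀ := by rw [hK]; ring
    linarith
  intro x hx
  have hττ : τ ∈ Icc 0 τ := ⟨hτ0, le_refl _⟩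
  have h1 := key (x, τ) ⟨hx, hττ⟩
  have h2 : 0 < D x τ :=
    pos_of_mul_pos_left (hδ0.trans h1) (Real.exp_pos (K * τ)).le
  refine (Real.log_lt_log_iff (R.pos x hx _ (mem2 _ hττ)) (R.pos x hx _ (mem1 _ hττ))).1 ?_
  simp only [hD] at h2
  linarith

/-- If `∂ₜu < 0` at the initial time, then `∂ₜu ≤ 0` throughout. -/
lemma RegSol.v_nonpos {l γ ε T : ℝ} {u v A : ℝ → ℝ → ℝ} (R : RegSol l γ ε T u v A)
    (hl : 0 < l) (hγ : γ < 0) (hε : 0 < ε) (hstart : ∀ x ∈ Icc (-l) l, v x 0 < 0) :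
    ∀ x ∈ Icc (-l) l, ∀ t ∈ Ico 0 T, v x t ≤ 0 := by
  intro x hx t ht
  have hT : 0 < T := ht.1.trans_lt ht.2
  -- By compactness of `[-l,l]`, `∂ₜu < 0` persists on a time interval `[0,h₀)`.
  obtain ⟨O, hO, hSO⟩ := (continuousOn_iff'.1 R.cv) (Iio 0) isOpen_Iio
  have hsub : Icc (-l) l ×ˢ ({0} : Set ℝ) ⊆ O := by
    rintro ⟨y, s⟩ ⟨hy, hs⟩
    simp only [mem_singleton_iff] at hy hs
    subst hs
    have : ((y, (0:ℝ)) : ℝ × ℝ) ∈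
        (fun q : ℝ × ℝ => v q.1 q.2) ⁻¹' Iio 0 ∩ Icc (-l) l ×ˢ Ico 0 T :=
      ⟨hstart y hy, hy, le_refl _, hT⟩
    rw [hSO] at this
    exact this.1
  obtain ⟨U, V, -, hV, hU', hV', hUV⟩ :=
    generalized_tube_lemma isCompact_Icc isCompact_singleton hO hsub
  obtain ⟨h₀, hh₀, hball⟩ := Metric.isOpen_iff.1 hV 0 (hV' rfl)
  have hneg : ∀ y ∈ Icc (-l) l, ∀ s ∈ Ico 0 T, s < h₀ → v y s < 0 := by
    intro y hy s hs hsh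
    have h1 : ((y, s) : ℝ × ℝ) ∈ O ∩ Icc (-l) l ×ˢ Ico 0 T := by
      refine ⟨hUV ⟨hU' hy, hball ?_⟩, hy, hs⟩
      simp only [Metric.mem_ball, Real.dist_eq, sub_zero, abs_of_nonneg hs.1]
      exact hsh
    rw [← hSO] at h1
    exact h1.1
  have hdec : ∀ y ∈ Icc (-l) l, ∀ h, 0 < h → h < h₀ → h < T → u y h < u y 0 := by
    intro y hy h hpos hh hhT
    have hsubI : Icc 0 h ⊆ Ico 0 T := fun s hs => ⟨hs.1, hs.2.trans_lt hhT⟩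
    refine strictAntiOn_of_hasDerivWithinAt_neg (convex_Icc 0 h) (f := u y) (f' := v y)
      ?_ ?_ ?_ ⟨le_refl _, hpos.le⟩ ⟨hpos.le, le_refl _⟩ hpos
    · exact fun s hs => ((R.ht y hy s (hsubI hs)).mono hsubI).continuousWithinAt
    · intro s hs
      exact (R.ht y hy s (hsubI (interior_subset hs))).mono (interior_subset.trans hsubI)
    · intro s hs
      have := interior_subset hs
      exact hneg y hy s (hsubI this) (this.2.trans_lt hh)
  have hder := nonneg_of_hasDerivWithinAt_right (R.ht x hx t ht).neg
    (mem_of_superset (Ico_mem_nhdsGT ht.2) fun s hs => ⟨ht.1.trans hs.1, hs.2⟩) (by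
      have hpos : t < min T (t + h₀) := lt_min ht.2 (by linarith)
      filter_upwards [Ioo_mem_nhdsGT hpos] with s hs
      have h1 : s < T := hs.2.trans_le (min_le_left _ _)
      have h2 : s < t + h₀ := hs.2.trans_le (min_le_right _ _)
      have h3 := R.shift_lt hl hγ hε (h := s - t) (τ := t) (by linarith [hs.1]) ht.1
        (by linarith) (fun y hy => hdec y hy _ (by linarith [hs.1]) (by linarith)
          (by linarith [ht.1])) x hx
      rw [add_sub_cancel] at h3
      simp only [Pi.neg_apply]
      linarith)
  linarith

/-! ### The mass estimate -/

/-- `log u(·,t)` is concave, so `u(·,t)` is at least the smaller of its boundary values. -/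
lemma RegSol.min_le {l γ ε T : ℝ} {u v A : ℝ → ℝ → ℝ} (R : RegSol l γ ε T u v A)
    (hl : 0 < l) (hv : ∀ x ∈ Icc (-l) l, ∀ t ∈ Ico 0 T, v x t ≤ 0) :
    ∀ x ∈ Icc (-l) l, ∀ t ∈ Ico 0 T, min (u (-l) t) (u l t) ≤ u x t := by
  intro x hx t ht
  have hll : (-l) ∈ Icc (-l) l := ⟨le_refl _, by linarith⟩
  have hlr : l ∈ Icc (-l) l := ⟨by linarith, le_refl _⟩
  have hc : ConcaveOn ℝ (Icc (-l) l) (fun y => Real.log (u y t)) := by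
    refine concaveOn_of_hasDerivWithinAt2_nonpos (convex_Icc _ _) (f' := fun y => A y t)
      (f'' := fun y => v y t) (fun y hy => (R.hA y hy t ht).continuousWithinAt) ?_ ?_ ?_
    · exact fun y hy => (R.hA y (interior_subset hy) t ht).mono interior_subset
    · exact fun y hy => (R.hv y (interior_subset hy) t ht).mono interior_subset
    · exact fun y hy => hv y (interior_subset hy) t ht
  have h1 := hc.min_le_of_mem_Icc hll hlr hx
  rcases min_le_iff.1 h1 with h2 | h2
  · exact (min_le_left _ _).trans
      ((Real.log_le_log_iff (R.pos _ hll t ht) (R.pos _ hx t ht)).1 h2)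
  · exact (min_le_right _ _).trans
      ((Real.log_le_log_iff (R.pos _ hlr t ht) (R.pos _ hx t ht)).1 h2)

lemma RegSol.cont_slice {l γ ε T : ℝ} {u v A : ℝ → ℝ → ℝ} (R : RegSol l γ ε T u v A)
    {t : ℝ} (ht : t ∈ Ico 0 T) :
    ContinuousOn (fun x => u x t) (Icc (-l) l) ∧ ContinuousOn (fun x => v x t) (Icc (-l) l) :=
  ⟨R.cu.comp (f := fun x : ℝ => (x, t)) (by fun_prop) (fun _ hx => ⟨hx, ht⟩),
    R.cv.comp (f := fun x : ℝ => (x, t)) (by fun_prop) (fun _ hx => ⟨hx, ht⟩)⟩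

lemma RegSol.mass_continuousOn {l γ ε T : ℝ} {u v A : ℝ → ℝ → ℝ} (R : RegSol l γ ε T u v A)
    (hl : 0 < l) {τ : ℝ} (hτ : τ < T) :
    ContinuousOn (fun t => ∫ x in (-l)..l, u x t) (Icc 0 τ) := by
  have hsub : ∀ t ∈ Icc 0 τ, t ∈ Ico 0 T := fun t ht => ⟨ht.1, ht.2.trans_lt hτ⟩
  have hI : uIoc (-l) l ⊆ Icc (-l) l := by
    rw [uIoc_of_le (by linarith)]; exact Ioc_subset_Icc_self
  obtain ⟨M, hM⟩ := (isCompact_Icc.prod isCompact_Icc).exists_bound_of_continuousOn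
    (R.cu.mono (prod_mono_right hsub))
  intro t ht
  refine intervalIntegral.continuousWithinAt_of_dominated_interval (bound := fun _ => M)
    (F := fun t x => u x t) ?_ ?_ (by simp) ?_
  · filter_upwards [self_mem_nhdsWithin] with s hs
    exact ((R.cont_slice (hsub s hs)).1.mono hI).aestronglyMeasurable measurableSet_uIoc
  · filter_upwards [self_mem_nhdsWithin] with s hs
    exact Eventually.of_forall fun x hx => hM (x, s) ⟨hI hx, hs⟩
  · refine Eventually.of_forall fun x hx => ?_
    exact ((R.ht x (hI hx) t (hsub t ht)).continuousWithinAt).mono hsub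

/-- The mass balance `m'(t) = 2γ (u(l,t)^{-ε} + u(-l,t)^{-ε})`. -/
lemma RegSol.mass_hasDerivAt {l γ ε T : ℝ} {u v A : ℝ → ℝ → ℝ} (R : RegSol l γ ε T u v A)
    (hl : 0 < l) {t : ℝ} (ht : t ∈ Ioo 0 T) :
    HasDerivAt (fun t => ∫ x in (-l)..l, u x t)
      (2 * γ * (u l t ^ (-ε) + u (-l) t ^ (-ε))) t := by
  obtain ⟨τ, h1, h2⟩ := exists_between ht.2
  have hsub : ∀ s ∈ Icc 0 τ, s ∈ Ico 0 T := fun s hs => ⟨hs.1, hs.2.trans_lt h2⟩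
  have hI : uIoc (-l) l ⊆ Icc (-l) l := by
    rw [uIoc_of_le (by linarith)]; exact Ioc_subset_Icc_self
  have hII : uIcc (-l) l = Icc (-l) l := uIcc_of_le (by linarith)
  have hnb : Ioo 0 τ ∈ 𝓝 t := Ioo_mem_nhds ht.1 h1
  have htI : t ∈ Ico 0 T := Ioo_subset_Ico_self ht
  obtain ⟨M, hM⟩ := (isCompact_Icc.prod isCompact_Icc).exists_bound_of_continuousOn
    (R.cv.mono (prod_mono_right hsub))
  have key := (intervalIntegral.hasDerivAt_integral_of_dominated_loc_of_deriv_le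
    (μ := volume) (a := -l) (b := l)
    (F := fun t x => u x t) (F' := fun t x => v x t) (bound := fun _ => M) hnb ?_ ?_ ?_ ?_
    (by simp) ?_)
  · have hFTC := intervalIntegral.integral_eq_sub_of_hasDerivAt_of_le
      (show -l ≤ l by linarith) (f := fun x => A x t) (f' := fun x => v x t)
      (fun x hx => (R.hv x hx t htI).continuousWithinAt)
      (fun x hx => (R.hv x (Ioo_subset_Icc_self hx) t htI).hasDerivAt (Icc_mem_nhds hx.1 hx.2))
      key.1
    have := key.2
    rw [hFTC, R.br t ht, R.bl t ht] at this
    exact this.congr_deriv (by ring)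
  · filter_upwards [hnb] with s hs
    exact ((R.cont_slice (hsub s (Ioo_subset_Icc_self hs))).1.mono hI).aestronglyMeasurable
      measurableSet_uIoc
  · exact ContinuousOn.intervalIntegrable (by rw [hII]; exact (R.cont_slice htI).1)
  · exact ((R.cont_slice htI).2.mono hI).aestronglyMeasurable measurableSet_uIoc
  · exact Eventually.of_forall fun x hx s hs => hM (x, s) ⟨hI hx, Ioo_subset_Icc_self hs⟩
  · exact Eventually.of_forall fun x hx s hs =>
      (R.ht x (hI hx) s (hsub s (Ioo_subset_Icc_self hs))).hasDerivAt
        (Ico_mem_nhds hs.1 (hs.2.trans h2))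

lemma RegSol.mass_ge {l γ ε T : ℝ} {u v A : ℝ → ℝ → ℝ} (R : RegSol l γ ε T u v A)
    (hl : 0 < l) {t c : ℝ} (ht : t ∈ Ico 0 T) (hc : ∀ x ∈ Icc (-l) l, c ≤ u x t) :
    2 * l * c ≤ ∫ x in (-l)..l, u x t := by
  have h1 := intervalIntegral.integral_mono_on (μ := volume) (show -l ≤ l by linarith)
    (f := fun _ => c) (g := fun x => u x t) (by simp)
    (ContinuousOn.intervalIntegrable (by
      rw [uIcc_of_le (by linarith)]; exact (R.cont_slice ht).1)) hc
  rw [intervalIntegral.integral_const, smul_eq_mul] at h1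
  linarith

lemma RegSol.mass_pos {l γ ε T : ℝ} {u v A : ℝ → ℝ → ℝ} (R : RegSol l γ ε T u v A)
    (hl : 0 < l) {t : ℝ} (ht : t ∈ Ico 0 T) : 0 < ∫ x in (-l)..l, u x t := by
  obtain ⟨x, hx, hmin⟩ := isCompact_Icc.exists_isMinOn (s := Icc (-l) l)
    ⟨0, by constructor <;> linarith⟩ (R.cont_slice ht).1
  have h1 := R.mass_ge hl ht (c := u x t) (fun y hy => hmin hy)
  have := R.pos x hx t ht
  exact lt_of_lt_of_le (by positivity) h1

/-- The mass estimate: since the average of `u(·,t)` dominates its smaller boundary value,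
`(m^{1+ε})' = (1+ε) m^ε m' ≤ 2γ(1+ε)(2l)^ε`. -/
lemma RegSol.mass_le {l γ ε T : ℝ} {u v A : ℝ → ℝ → ℝ} (R : RegSol l γ ε T u v A)
    (hl : 0 < l) (hγ : γ < 0) (hε : 0 < ε)
    (hv : ∀ x ∈ Icc (-l) l, ∀ t ∈ Ico 0 T, v x t ≤ 0) {t : ℝ} (ht : t ∈ Ico 0 T) :
    (∫ x in (-l)..l, u x t) ^ (1 + ε) ≤
      (∫ x in (-l)..l, u x 0) ^ (1 + ε) + (2 * γ * (1 + ε) * (2 * l) ^ ε) * t := by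
  set m : ℝ → ℝ := fun t => ∫ x in (-l)..l, u x t with hm
  set α := 2 * γ * (1 + ε) * (2 * l) ^ ε with hα
  have hsub : ∀ s ∈ Icc 0 t, s ∈ Ico 0 T := fun s hs => ⟨hs.1, hs.2.trans_lt ht.2⟩
  have hanti : AntitoneOn (fun s => m s ^ (1 + ε) - α * s) (Icc 0 t) := by
    refine antitoneOn_of_hasDerivWithinAt_nonpos (convex_Icc _ _)
      (f' := fun s => 2 * γ * (u l s ^ (-ε) + u (-l) s ^ (-ε)) * (1 + ε) * m s ^ (1 + ε - 1) - α)
      ?_ ?_ ?_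
    · refine ContinuousOn.sub ((R.mass_continuousOn hl ht.2).rpow_const ?_) (by fun_prop)
      exact fun s hs => Or.inl (R.mass_pos hl (hsub s hs)).ne'
    · intro s hs
      rw [interior_Icc] at hs
      have hs' : s ∈ Ioo 0 T := ⟨hs.1, hs.2.trans ht.2⟩
      have h1 := (R.mass_hasDerivAt hl hs').rpow_const (p := 1 + ε)
        (Or.inl (R.mass_pos hl (Ioo_subset_Ico_self hs')).ne')
      have h2 := h1.sub ((hasDerivAt_id s).const_mul α)
      rw [mul_one] at h2
      exact h2.hasDerivWithinAt
    · intro s hs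
      rw [interior_Icc] at hs
      have hs' : s ∈ Ico 0 T := ⟨hs.1.le, hs.2.trans ht.2⟩
      have hp := R.mass_pos hl hs'
      have hge := R.mass_ge hl hs' (fun x hx => R.min_le hl hv x hx s hs')
      have hr := R.pos l ⟨by linarith, le_refl _⟩ s hs'
      have hle := R.pos (-l) ⟨le_refl _, by linarith⟩ s hs'
      change 0 < m s at hp
      change _ ≤ m s at hge
      have hbd : ∀ a, 0 < a → 2 * l * a ≤ m s → (2 * l) ^ ε ≤ a ^ (-ε) * m s ^ ε := by
        intro a ha h1
        have h2 : (2 * l * a) ^ ε ≤ m s ^ ε := Real.rpow_le_rpow (by positivity) h1 hε.le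
        rw [Real.mul_rpow (by positivity) ha.le] at h2
        rw [Real.rpow_neg ha.le]
        have h3 : 0 < a ^ ε := Real.rpow_pos_of_pos ha _
        rw [inv_mul_eq_div, le_div_iff₀ h3]
        exact h2
      have hsum : (2 * l) ^ ε ≤ (u l s ^ (-ε) + u (-l) s ^ (-ε)) * m s ^ ε := by
        have p1 : 0 ≤ u l s ^ (-ε) * m s ^ ε := by positivity
        have p2 : 0 ≤ u (-l) s ^ (-ε) * m s ^ ε := by positivity
        rw [add_mul]
        rcases min_choice (u (-l) s) (u l s) with h | h <;> rw [h] at hge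
        · have := hbd _ hle hge; linarith
        · have := hbd _ hr hge; linarith
      have hneg : 2 * γ * (1 + ε) ≤ 0 := by nlinarith
      have := mul_le_mul_of_nonpos_left hsum hneg
      rw [add_sub_cancel_left]
      rw [hα]
      linarith
  have := hanti ⟨le_refl _, ht.1⟩ ⟨ht.1, le_refl _⟩ ht.1
  simp only [mul_zero, sub_zero] at this
  change m t ^ (1 + ε) ≤ m 0 ^ (1 + ε) + α * t
  linarith

/-! ### Regularity of classical solutions -/

/-- Partial derivatives of a `C¹` function on `[-l,l] × [0,T)`, as one-sided derivatives along
the slices. -/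
lemma hasDerivWithinAt_slices {l T : ℝ} {f : ℝ × ℝ → ℝ}
    (hf : ContDiffOn ℝ 1 f (Icc (-l) l ×ˢ Ico 0 T)) {x t : ℝ} (hx : x ∈ Icc (-l) l)
    (ht : t ∈ Ico 0 T) :
    HasDerivWithinAt (fun y => f (y, t))
      (fderivWithin ℝ f (Icc (-l) l ×ˢ Ico 0 T) (x, t) (1, 0)) (Icc (-l) l) x ∧
    HasDerivWithinAt (fun s => f (x, s))
      (fderivWithin ℝ f (Icc (-l) l ×ˢ Ico 0 T) (x, t) (0, 1)) (Ico 0 T) t := by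
  have hd : HasFDerivWithinAt f (fderivWithin ℝ f (Icc (-l) l ×ˢ Ico 0 T) (x, t))
      (Icc (-l) l ×ˢ Ico 0 T) (x, t) :=
    ((hf.differentiableOn one_ne_zero) (x, t) ⟨hx, ht⟩).hasFDerivWithinAt
  constructor
  · exact hd.comp_hasDerivWithinAt (f := fun y : ℝ => (y, t)) x
      ((hasDerivWithinAt_id x _).prodMk (hasDerivWithinAt_const x _ t)) (fun y hy => ⟨hy, ht⟩)
  · exact hd.comp_hasDerivWithinAt (f := fun s : ℝ => (x, s)) t
      ((hasDerivWithinAt_const t _ x).prodMk (hasDerivWithinAt_id t _)) (fun s hs => ⟨hx, hs⟩)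

/-- The two-sided derivatives of the boundary condition are nonzero, hence genuine, and so agree
with the one-sided ones. -/
lemma bdry_eq {l γ ε u' a : ℝ} {w : ℝ → ℝ} {x : ℝ} (hx : x ∈ Icc (-l) l) (hl : 0 < l)
    (hpos : 0 < w x) (hd : deriv w x = u') (hne : u' ≠ 0)
    (hA : HasDerivWithinAt (fun y => Real.log (w y)) a (Icc (-l) l) x)
    (hu' : u' = 2 * γ * w x ^ (1 - ε)) : a = 2 * γ * w x ^ (-ε) := by
  have h1 : HasDerivAt w u' x := by
    rw [← hd] at hne ⊢
    exact (differentiableAt_of_deriv_ne_zero hne).hasDerivAt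
  have h2 := (h1.log hpos.ne').hasDerivWithinAt (s := Icc (-l) l)
  have h3 := (uniqueDiffOn_Icc (show -l < l by linarith) x hx).eq_deriv _ hA h2
  rw [h3, hu', sub_eq_add_neg, Real.rpow_add hpos, Real.rpow_one]
  field_simp

/-- Every classical solution is regular in the sense of `RegSol`; the equation extends to the
boundary and to `t = 0` by continuity of `∂ₜu` and `∂ₓₓ log u`. -/
lemma IsLogDiffSol.exists_regSol {l γ ε T : ℝ} {u₀ : ℝ → ℝ} {u : ℝ → ℝ → ℝ}
    (hu : IsLogDiffSol l γ (1 - ε) T u₀ u) (hl : 0 < l) (hγ : γ < 0) (hT : 0 < T) :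
    ∃ v A, RegSol l γ ε T u v A := by
  obtain ⟨hC, hpos, hpde, hbr, hbl, -⟩ := hu
  set S := Icc (-l) l ×ˢ Ico (0:ℝ) T with hS
  have hSu : UniqueDiffOn ℝ S :=
    (uniqueDiffOn_Icc (by linarith)).prod (uniqueDiffOn_Ico 0 T)
  set f : ℝ × ℝ → ℝ := fun q => u q.1 q.2 with hf
  set W : ℝ × ℝ → ℝ := fun q => Real.log (u q.1 q.2) with hW
  have hWC : ContDiffOn ℝ 2 W S := hC.log fun q hq => (hpos _ hq.1 _ hq.2).ne'
  set A : ℝ × ℝ → ℝ := fun q => fderivWithin ℝ W S q (1, 0) with hAdef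
  have hAC : ContDiffOn ℝ 1 A S :=
    (hWC.fderivWithin hSu (m := 1) (by norm_num)).clm_apply contDiffOn_const
  set B : ℝ × ℝ → ℝ := fun q => fderivWithin ℝ A S q (1, 0) with hBdef
  have hBC : ContinuousOn B S :=
    ((hAC.fderivWithin hSu (m := 0) (by norm_num)).clm_apply contDiffOn_const).continuousOn
  set V : ℝ × ℝ → ℝ := fun q => fderivWithin ℝ f S q (0, 1) with hVdef
  have hC1 : ContDiffOn ℝ 1 f S := hC.of_le (by norm_num)
  have hVC : ContinuousOn V S :=
    ((hC1.fderivWithin hSu (m := 0) (by norm_num)).clm_apply contDiffOn_const).continuousOn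
  have hA : ∀ x ∈ Icc (-l) l, ∀ t ∈ Ico (0:ℝ) T,
      HasDerivWithinAt (fun y => Real.log (u y t)) (A (x, t)) (Icc (-l) l) x := fun x hx t ht =>
    (hasDerivWithinAt_slices (hWC.of_le (by norm_num)) hx ht).1
  have hB : ∀ x ∈ Icc (-l) l, ∀ t ∈ Ico (0:ℝ) T,
      HasDerivWithinAt (fun y => A (y, t)) (B (x, t)) (Icc (-l) l) x := fun x hx t ht =>
    (hasDerivWithinAt_slices hAC hx ht).1
  have hV : ∀ x ∈ Icc (-l) l, ∀ t ∈ Ico (0:ℝ) T,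
      HasDerivWithinAt (u x) (V (x, t)) (Ico 0 T) t := fun x hx t ht =>
    (hasDerivWithinAt_slices hC1 hx ht).2
  have hint : EqOn B V (Ioo (-l) l ×ˢ Ioo 0 T) := by
    rintro ⟨x, t⟩ ⟨hx, ht⟩
    simp only at hx ht
    have hx' := Ioo_subset_Icc_self hx
    have ht' := Ioo_subset_Ico_self ht
    have h1 := ((hV x hx' t ht').hasDerivAt (Ico_mem_nhds ht.1 ht.2)).deriv
    have h2 : deriv (fun y => Real.log (u y t)) =ᶠ[𝓝 x] fun y => A (y, t) := by
      filter_upwards [Ioo_mem_nhds hx.1 hx.2] with y hy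
      exact ((hA y (Ioo_subset_Icc_self hy) t ht').hasDerivAt (Icc_mem_nhds hy.1 hy.2)).deriv
    have h3 := ((hB x hx' t ht').hasDerivAt (Icc_mem_nhds hx.1 hx.2)).deriv
    rw [← h1, hpde x hx' t ht, h2.deriv_eq, h3]
  have hBV : EqOn B V S := by
    refine hint.of_subset_closure hBC hVC
      (prod_mono Ioo_subset_Icc_self Ioo_subset_Ico_self) ?_
    rw [closure_prod_eq, closure_Ioo (by linarith), closure_Ioo hT.ne]
    exact prod_mono_right Ico_subset_Icc_self
  refine ⟨fun x t => V (x, t), fun x t => A (x, t), ⟨hC.continuousOn, hVC, hpos, hA, ?_, hV, ?_, ?_⟩⟩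
  · intro x hx t ht
    have := hB x hx t ht
    rwa [hBV ⟨hx, ht⟩] at this
  · intro t ht
    have hx : l ∈ Icc (-l) l := ⟨by linarith, le_refl _⟩
    have hp := hpos l hx t (Ioo_subset_Ico_self ht)
    have hpp : 0 < u l t ^ (1 - ε) := Real.rpow_pos_of_pos hp _
    exact bdry_eq (w := fun y => u y t) hx hl hp (hbr t ht) (by nlinarith)
      (hA l hx t (Ioo_subset_Ico_self ht)) rfl
  · intro t ht
    have hx : -l ∈ Icc (-l) l := ⟨le_refl _, by linarith⟩
    have hp := hpos (-l) hx t (Ioo_subset_Ico_self ht)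
    have hpp : 0 < u (-l) t ^ (1 - ε) := Real.rpow_pos_of_pos hp _
    have := bdry_eq (γ := -γ) (ε := ε) (w := fun y => u y t) hx hl hp (hbl t ht) (by nlinarith)
      (hA (-l) hx t (Ioo_subset_Ico_self ht)) (by ring)
    rw [this]; ring

/-- The strict log-concavity of `u₀` reads `∂ₜu(·,0) < 0` up to the boundary. At `±l` the
two-sided second derivative is nonzero, hence genuine, so `∂ₓ log u₀` is continuous there and its
derivative is the limit of the interior values. -/
lemma RegSol.v_zero_neg {l γ ε T : ℝ} {u v A : ℝ → ℝ → ℝ} (R : RegSol l γ ε T u v A)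
    (hl : 0 < l) (hT : 0 < T) {u₀ : ℝ → ℝ} (h0 : ∀ x ∈ Icc (-l) l, u x 0 = u₀ x)
    (hconcave : ∀ x ∈ Icc (-l) l, deriv (deriv (fun y => Real.log (u₀ y))) x < 0) :
    ∀ x ∈ Icc (-l) l, v x 0 < 0 := by
  set g := deriv (fun y => Real.log (u₀ y)) with hg
  have hT0 : (0:ℝ) ∈ Ico 0 T := ⟨le_refl _, hT⟩
  have hgA : ∀ x ∈ Ioo (-l) l, g x = A x 0 := by
    intro x hx
    have h1 : (fun y => Real.log (u₀ y)) =ᶠ[𝓝 x] fun y => Real.log (u y 0) := by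
      filter_upwards [Ioo_mem_nhds hx.1 hx.2] with y hy
      rw [h0 y (Ioo_subset_Icc_self hy)]
    rw [hg, h1.deriv_eq]
    exact ((R.hA x (Ioo_subset_Icc_self hx) 0 hT0).hasDerivAt (Icc_mem_nhds hx.1 hx.2)).deriv
  have hgv : ∀ x ∈ Ioo (-l) l, HasDerivAt g (v x 0) x := by
    intro x hx
    refine ((R.hv x (Ioo_subset_Icc_self hx) 0 hT0).hasDerivAt
      (Icc_mem_nhds hx.1 hx.2)).congr_of_eventuallyEq ?_
    filter_upwards [Ioo_mem_nhds hx.1 hx.2] with y hy using hgA y hy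
  have hgd : ∀ x ∈ Icc (-l) l, DifferentiableAt ℝ g x := fun x hx =>
    differentiableAt_of_deriv_ne_zero (hconcave x hx).ne
  have hdiff : DifferentiableOn ℝ g (Ioo (-l) l) := fun x hx =>
    (hgd x (Ioo_subset_Icc_self hx)).differentiableWithinAt
  have hvc := (R.cont_slice hT0).2
  intro x hx
  refine lt_of_eq_of_lt ?_ (hconcave x hx)
  have hgx := (hgd x hx).hasDerivAt
  rcases hx.1.eq_or_lt with hxl | hxl
  · subst hxl
    have hnb : Ioo (-l) l ∈ 𝓝[>] (-l) := Ioo_mem_nhdsGT (by linarith)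
    have h1 : HasDerivWithinAt g (v (-l) 0) (Ici (-l)) (-l) := by
      refine hasDerivWithinAt_Ici_of_tendsto_deriv hdiff
        hgx.continuousAt.continuousWithinAt hnb ?_
      have h2 : Tendsto (fun y => v y 0) (𝓝[>] (-l)) (𝓝 (v (-l) 0)) :=
        (hvc _ hx).mono_of_mem_nhdsWithin (mem_of_superset hnb Ioo_subset_Icc_self)
      refine h2.congr' ?_
      filter_upwards [hnb] with y hy using (hgv y hy).deriv.symm
    exact (uniqueDiffOn_Ici (-l) _ self_mem_Ici).eq_deriv _ h1 hgx.hasDerivWithinAt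
  rcases hx.2.eq_or_lt with hxr | hxr
  · subst hxr
    have hnb : Ioo (-x) x ∈ 𝓝[<] x := Ioo_mem_nhdsLT (by linarith)
    have h1 : HasDerivWithinAt g (v x 0) (Iic x) x := by
      refine hasDerivWithinAt_Iic_of_tendsto_deriv hdiff
        hgx.continuousAt.continuousWithinAt hnb ?_
      have h2 : Tendsto (fun y => v y 0) (𝓝[<] x) (𝓝 (v x 0)) :=
        (hvc _ hx).mono_of_mem_nhdsWithin (mem_of_superset hnb Ioo_subset_Icc_self)
      refine h2.congr' ?_
      filter_upwards [hnb] with y hy using (hgv y hy).deriv.symm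
    exact (uniqueDiffOn_Iic x _ self_mem_Iic).eq_deriv _ h1 hgx.hasDerivWithinAt
  · exact (hgv x ⟨hxl, hxr⟩).unique hgx

theorem finite_time_blowdown_p_lt_one
    (l γ ε T : ℝ) (hl : 0 < l) (hγ : γ < 0) (hε : 0 < ε) (u₀ : ℝ → ℝ)
    (hu₀smooth : ContDiffOn ℝ (⊤ : ℕ∞) u₀ (Icc (-l) l))
    (hu₀pos : ∀ x ∈ Icc (-l) l, 0 < u₀ x)
    (hconcave : ∀ x ∈ Icc (-l) l, deriv (deriv (fun y => Real.log (u₀ y))) x < 0)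
    (hcompat : CompatCond l γ (1 - ε) u₀)
    (u : ℝ → ℝ → ℝ) (hu : IsLogDiffSol l γ (1 - ε) T u₀ u) :
    (∀ t ∈ Ico (0:ℝ) T,
      (∫ x in (-l)..l, u x t) ^ (1 + ε) ≤
        (∫ x in (-l)..l, u₀ x) ^ (1 + ε) + (2 * γ * (1 + ε) * (2 * l) ^ ε) * t) ∧
    T ≤ -((∫ x in (-l)..l, u₀ x) ^ (1 + ε)) / (2 * γ * (1 + ε) * (2 * l) ^ ε) := by
  set α := 2 * γ * (1 + ε) * (2 * l) ^ ε with hα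
  have hα0 : α < 0 := by
    have : 0 < (1 + ε) * (2 * l) ^ ε := by positivity
    rw [hα, mul_assoc]
    nlinarith
  have hm0 : 0 ≤ ∫ x in (-l)..l, u₀ x :=
    intervalIntegral.integral_nonneg (by linarith) fun x hx => (hu₀pos x hx).le
  have hb0 : 0 ≤ -((∫ x in (-l)..l, u₀ x) ^ (1 + ε)) / α :=
    div_nonneg_of_nonpos (neg_nonpos.2 (Real.rpow_nonneg hm0 _)) hα0.le
  rcases le_or_gt T 0 with hT | hT
  · exact ⟨fun t ht => absurd (ht.1.trans_lt ht.2) hT.not_gt, hT.trans hb0⟩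
  obtain ⟨v, A, R⟩ := hu.exists_regSol hl hγ hT
  have hstart := hu.2.2.2.2.2
  have hv := R.v_nonpos hl hγ hε (R.v_zero_neg hl hT hstart hconcave)
  have hmass : ∫ x in (-l)..l, u x 0 = ∫ x in (-l)..l, u₀ x :=
    intervalIntegral.integral_congr fun x hx => hstart x (by rwa [uIcc_of_le (by linarith)] at hx)
  have main : ∀ t ∈ Ico (0:ℝ) T, (∫ x in (-l)..l, u x t) ^ (1 + ε) ≤
      (∫ x in (-l)..l, u₀ x) ^ (1 + ε) + α * t := by
    intro t ht
    rw [← hmass]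
    exact R.mass_le hl hγ hε hv ht
  refine ⟨main, ?_⟩
  -- Otherwise the mass estimate would make the mass vanish at the time `-m(0)^{1+ε}/α < T`.
  by_contra! hlt
  have h1 := main _ ⟨hb0, hlt⟩
  rw [mul_div_cancel₀ _ hα0.ne, add_neg_cancel] at h1
  exact absurd (Real.rpow_pos_of_pos (R.mass_pos hl ⟨hb0, hlt⟩) (1 + ε)) h1.not_gt
end

section
/- (Finite-time blow-up for p > 2, γ > 0.) Let l > 0, γ > 0 and p > 2. Let u₀ > 0 be a smooth function on [-l,l] with ∂ₓₓ log u₀ > 0 satisfying the compatibility condition, and let u be a positive classical solution of the 1D logarithmic diffusion problem on [-l,l] × [0,T) with initial data u₀. Then the mass m(t) = ∫_{-l}^{l} u(x,t) dx satisfies m(t)^{p-2} ≥ 1/( m(0)^{2-p} + β t ) for all t ∈ [0,T), where β = 2(2-p)γ/(2l)^{p-1} < 0. In particular T ≤ m(0)^{2-p}/(-β) < ∞: the solution blows up in finite time and cannot be extended as a classical solution beyond time m(0)^{2-p}/(-β). -/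
/- STATEMENT 18: Finite-time blow-up for p > 2, γ > 0: the mass m(t) = ∫_{-l}^{l} u(x,t) dx
satisfies m(t)^{p-2} ≥ 1/(m(0)^{2-p} + βt) with β = 2(2-p)γ/(2l)^{p-1} < 0, so
T ≤ m(0)^{2-p}/(-β). -/

/-!
Integrating the equation over `[-l,l]` shows that the mass grows by the boundary flux of `log u`,
`m' = 2γ (u(l)^{p-1} + u(-l)^{p-1})` (`IsLogDiffSol.mass_hasDerivAt`). If `log u(·,t)` is convex,
`u(·,t)` attains its maximum at an endpoint, so one of the two boundary values is at least the
average `m / (2l)`. Hence `m' ≥ 2γ (m / (2l))^{p-1}`, that is `(m^{2-p})' ≤ β`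
(`IsLogDiffSol.mass_rpow_le`), and since `m^{2-p}` stays positive both claims follow.

Convexity is the same as `∂ₜu ≥ 0`. To avoid third derivatives of `u`, this is obtained from a
comparison principle (`logDiff_comparison`) instead of from the equation for `∂ₜu`. The initial
datum is a stationary subsolution, so `u(·,h) ≥ u₀` for every `h ≥ 0`; comparing `u` with its time
shift `u(·, · + h)` then shows that `u` is nondecreasing in time. The comparison principle is the
linear maximum principle `robin_max_principle` applied to the difference of the logarithms.
-/

open Set Real

/-! ### Necessary conditions at a minimum -/

lemma deriv_nonpos_of_min_right {f : ℝ → ℝ} {f' a b : ℝ} (hab : a < b)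
    (hf : HasDerivAt f f' b) (hmin : ∀ x ∈ Icc a b, f b ≤ f x) : f' ≤ 0 := by
  have h1 : IsLocalMinOn f (Icc a b) b := IsMinOn.localize (fun x hx => hmin x hx)
  have h2 : a - b ∈ posTangentConeAt (Icc a b) b :=
    sub_mem_posTangentConeAt_of_segment_subset
      ((convex_Icc a b).segment_subset (right_mem_Icc.2 hab.le) (left_mem_Icc.2 hab.le))
  have h3 := h1.hasFDerivWithinAt_nonneg hf.hasFDerivAt.hasFDerivWithinAt h2
  simp at h3
  nlinarith

lemma deriv_nonneg_of_min_left {f : ℝ → ℝ} {f' a b : ℝ} (hab : a < b)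
    (hf : HasDerivAt f f' a) (hmin : ∀ x ∈ Icc a b, f a ≤ f x) : 0 ≤ f' := by
  have h1 : IsLocalMinOn f (Icc a b) a := IsMinOn.localize (fun x hx => hmin x hx)
  have h2 : b - a ∈ posTangentConeAt (Icc a b) a :=
    sub_mem_posTangentConeAt_of_segment_subset
      ((convex_Icc a b).segment_subset (left_mem_Icc.2 hab.le) (right_mem_Icc.2 hab.le))
  have h3 := h1.hasFDerivWithinAt_nonneg hf.hasFDerivAt.hasFDerivWithinAt h2
  simp at h3
  nlinarith

/-- If the second derivative were negative, the point would also be a local maximum, so the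
function would be locally constant. -/
lemma IsLocalMin.deriv_deriv_nonneg {f : ℝ → ℝ} {x : ℝ} (h : IsLocalMin f x)
    (hc : ContinuousAt f x) : 0 ≤ deriv (deriv f) x := by
  by_contra! hneg
  have hmax := isLocalMax_of_deriv_deriv_neg hneg h.deriv_eq_zero hc
  have hconst : f =ᶠ[nhds x] fun _ => f x := by
    filter_upwards [h, hmax] with y h1 h2 using le_antisymm h2 h1
  have h0 : deriv (deriv f) x = 0 := by
    rw [hconst.deriv.deriv_eq]
    simp
  linarith

/-! ### Maximum principle and comparison -/

lemma hasDerivAt_expSq (m k A x : ℝ) :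
    HasDerivAt (fun y => m * Real.exp (k + A * y ^ 2))
      (m * Real.exp (k + A * x ^ 2) * (2 * A * x)) x := by
  have h1 : HasDerivAt (fun y : ℝ => k + A * y ^ 2) (2 * A * x) x := by
    have := ((hasDerivAt_pow 2 x).const_mul A).const_add k
    refine this.congr_deriv ?_
    norm_num
    ring
  refine (h1.exp.const_mul m).congr_deriv ?_
  ring

lemma deriv_deriv_expSq (m k A x : ℝ) :
    deriv (deriv (fun y => m * Real.exp (k + A * y ^ 2))) x =
      m * Real.exp (k + A * x ^ 2) * (2 * A + 4 * A ^ 2 * x ^ 2) := by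
  have h1 : deriv (fun y => m * Real.exp (k + A * y ^ 2)) =
      fun y => m * Real.exp (k + A * y ^ 2) * (2 * A * y) :=
    funext fun y => (hasDerivAt_expSq m k A y).deriv
  rw [h1]
  have h2 := (hasDerivAt_expSq m k A x).mul ((hasDerivAt_id x).const_mul (2 * A))
  refine (HasDerivAt.deriv (f' := _) h2).trans ?_
  simp; ring

/-- Linear parabolic maximum principle with a Robin condition of the unfavourable sign. The
differential inequalities are only required where `d < 0`. A negative minimum of
`exp (-K t - A x²) d` is excluded at the boundary by `2 A l > B` and in the interior by the size
of `K`. -/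
lemma robin_max_principle {l τ a₀ B C : ℝ} (hl : 0 < l) (hτ : 0 ≤ τ) (ha₀ : 0 < a₀)
    {d a : ℝ → ℝ → ℝ}
    (hcont : ContinuousOn (fun q : ℝ × ℝ => d q.1 q.2) (Icc (-l) l ×ˢ Icc 0 τ))
    (h0 : ∀ x ∈ Icc (-l) l, 0 ≤ d x 0)
    (hint : ∀ x ∈ Ioo (-l) l, ∀ t ∈ Ioc 0 τ, d x t < 0 →
      ContDiffAt ℝ 2 (fun y => d y t) x ∧ DifferentiableAt ℝ (d x) t ∧ a₀ ≤ a x t ∧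
      deriv (deriv (fun y => d y t)) x ≤ a x t * deriv (d x) t - C * d x t)
    (hr : ∀ t ∈ Ioc 0 τ, d l t < 0 → ∃ b, HasDerivAt (fun y => d y t) b l ∧ B * d l t ≤ b)
    (hlft : ∀ t ∈ Ioc 0 τ, d (-l) t < 0 →
      ∃ b, HasDerivAt (fun y => d y t) b (-l) ∧ b ≤ -(B * d (-l) t)) :
    ∀ x ∈ Icc (-l) l, ∀ t ∈ Icc 0 τ, 0 ≤ d x t := by
  obtain ⟨A, hA, hAB⟩ : ∃ A : ℝ, 0 < A ∧ B < 2 * A * l := by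
    refine ⟨(|B| + 1) / (2 * l), by positivity, ?_⟩
    have : 2 * ((|B| + 1) / (2 * l)) * l = |B| + 1 := by field_simp
    rw [this]
    linarith [le_abs_self B]
  obtain ⟨K, hK, hKA⟩ : ∃ K : ℝ, 0 < K ∧ 2 * A + 4 * A ^ 2 * l ^ 2 + C < a₀ * K := by
    refine ⟨(2 * A + 4 * A ^ 2 * l ^ 2 + |C| + 1) / a₀, by positivity, ?_⟩
    rw [mul_div_cancel₀ _ ha₀.ne']
    linarith [le_abs_self C]
  set E : ℝ → ℝ → ℝ := fun x t => Real.exp (K * t + A * x ^ 2) with hE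
  have hEpos : ∀ x t, 0 < E x t := fun x t => Real.exp_pos _
  have hgc : ContinuousOn (fun q : ℝ × ℝ => d q.1 q.2 / E q.1 q.2)
      (Icc (-l) l ×ˢ Icc 0 τ) := by
    refine hcont.div (by simp only [hE]; fun_prop) (fun q _ => (hEpos _ _).ne')
  obtain ⟨⟨x₀, t₀⟩, ⟨hx₀, ht₀⟩, hmin⟩ := (isCompact_Icc.prod isCompact_Icc).exists_isMinOn
    ⟨((0 : ℝ), (0 : ℝ)), ⟨⟨by linarith, hl.le⟩, ⟨le_rfl, hτ⟩⟩⟩ hgc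
  simp only at hx₀ ht₀
  by_contra! hcon
  obtain ⟨x₁, hx₁, t₁, ht₁, hneg⟩ := hcon
  set m := d x₀ t₀ / E x₀ t₀ with hm
  have hmin' : ∀ x ∈ Icc (-l) l, ∀ t ∈ Icc 0 τ, m ≤ d x t / E x t := fun x hx t ht =>
    hmin (show (x, t) ∈ Icc (-l) l ×ˢ Icc 0 τ from ⟨hx, ht⟩)
  have hmneg : m < 0 := (hmin' x₁ hx₁ t₁ ht₁).trans_lt (div_neg_of_neg_of_pos hneg (hEpos _ _))
  have hbelow : ∀ x ∈ Icc (-l) l, ∀ t ∈ Icc 0 τ, 0 ≤ d x t - m * E x t := by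
    intro x hx t ht
    have := (le_div_iff₀ (hEpos x t)).1 (hmin' x hx t ht)
    linarith
  have htouch : d x₀ t₀ = m * E x₀ t₀ := by rw [hm, div_mul_cancel₀ _ (hEpos _ _).ne']
  have hdneg : d x₀ t₀ < 0 := by rw [htouch]; exact mul_neg_of_neg_of_pos hmneg (hEpos _ _)
  have ht₀' : t₀ ∈ Ioc 0 τ := by
    refine ⟨lt_of_le_of_ne ht₀.1 ?_, ht₀.2⟩
    rintro rfl
    linarith [h0 x₀ hx₀]
  have hlt : -l < l := by linarith
  rcases eq_or_lt_of_le hx₀.2 with hxl | hxl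
  · rw [hxl] at hdneg htouch
    obtain ⟨b, hb, hBb⟩ := hr t₀ ht₀' hdneg
    have := deriv_nonpos_of_min_right hlt (hb.sub (hasDerivAt_expSq m (K * t₀) A l))
      (fun x hx => by
        have := hbelow x hx t₀ ht₀
        simp only [hE] at this htouch
        simp only [Pi.sub_apply]
        linarith)
    simp only [hE] at htouch
    rw [← htouch] at this
    nlinarith
  rcases eq_or_lt_of_le hx₀.1 with hxl' | hxl'
  · rw [← hxl'] at hdneg htouch
    obtain ⟨b, hb, hBb⟩ := hlft t₀ ht₀' hdneg
    have := deriv_nonneg_of_min_left hlt (hb.sub (hasDerivAt_expSq m (K * t₀) A (-l)))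
      (fun x hx => by
        have := hbelow x hx t₀ ht₀
        simp only [hE] at this htouch
        simp only [Pi.sub_apply]
        linarith)
    simp only [hE] at htouch
    rw [← htouch] at this
    nlinarith
  obtain ⟨hcd, hdt, haa, hineq⟩ := hint x₀ ⟨hxl', hxl⟩ t₀ ht₀' hdneg
  -- first-order condition in time: the minimum over `[0, t₀]` is attained at the right end
  have htime : deriv (d x₀) t₀ ≤ K * d x₀ t₀ := by
    have hEt : HasDerivAt (fun t => m * Real.exp (K * t + A * x₀ ^ 2))
        (m * (Real.exp (K * t₀ + A * x₀ ^ 2) * K)) t₀ := by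
      have h1 : HasDerivAt (fun t : ℝ => K * t + A * x₀ ^ 2) K t₀ := by
        simpa using ((hasDerivAt_id t₀).const_mul K).add_const (A * x₀ ^ 2)
      exact h1.exp.const_mul m
    have := deriv_nonpos_of_min_right ht₀'.1 (hdt.hasDerivAt.sub hEt)
      (fun t ht => by
        have := hbelow x₀ hx₀ t ⟨ht.1, ht.2.trans ht₀.2⟩
        simp only [hE] at this htouch
        simp only [Pi.sub_apply]
        linarith)
    rw [← mul_assoc] at this
    simp only [hE] at htouch
    rw [← htouch] at this
    linarith
  have hspace : d x₀ t₀ * (2 * A + 4 * A ^ 2 * x₀ ^ 2) ≤ deriv (deriv (fun y => d y t₀)) x₀ := by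
    set φ : ℝ → ℝ := fun y => m * Real.exp (K * t₀ + A * y ^ 2) with hφ
    have hφc : ContDiff ℝ 2 φ := by simp only [hφ]; fun_prop
    have hloc : IsLocalMin ((fun y => d y t₀) - φ) x₀ := by
      filter_upwards [Icc_mem_nhds hxl' hxl] with y hy
      have := hbelow y hy t₀ ht₀
      simp only [hE] at this htouch
      simp only [Pi.sub_apply, hφ]
      linarith
    have h2 := hloc.deriv_deriv_nonneg (hcd.continuousAt.sub hφc.continuous.continuousAt)
    have hev : deriv ((fun y => d y t₀) - φ) =ᶠ[nhds x₀] deriv (fun y => d y t₀) - deriv φ := by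
      filter_upwards [hcd.eventually (by simp)] with y hy
      exact deriv_sub (hy.differentiableAt (by simp)) (hφc.differentiable (by simp) y)
    rw [hev.deriv_eq, deriv_sub
      ((hcd.derivWithin (m := 1) (by norm_num)).differentiableAt (by simp))
      ((hφc.contDiffAt.derivWithin (m := 1) (by norm_num)).differentiableAt (by simp)),
      deriv_deriv_expSq] at h2
    simp only [hE] at htouch
    rw [← htouch] at h2
    linarith
  have hx2 : x₀ ^ 2 ≤ l ^ 2 := sq_le_sq' hx₀.1 hx₀.2
  have h4 : a x₀ t₀ * deriv (d x₀) t₀ ≤ a x₀ t₀ * (K * d x₀ t₀) :=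
    mul_le_mul_of_nonneg_left htime (ha₀.le.trans haa)
  have h5 : a₀ * K ≤ a x₀ t₀ * K := mul_le_mul_of_nonneg_right haa hK.le
  have h6 : 4 * A ^ 2 * x₀ ^ 2 ≤ 4 * A ^ 2 * l ^ 2 := by gcongr
  have h7 : d x₀ t₀ * (a x₀ t₀ * K - C - (2 * A + 4 * A ^ 2 * x₀ ^ 2)) < 0 :=
    mul_neg_of_neg_of_pos hdneg (by linarith)
  linarith

/-- Comparison of a supersolution `v` with a subsolution `w` of the logarithmic diffusion problem,
obtained by applying the maximum principle to `log v - log w`. -/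
lemma logDiff_comparison {l γ p τ C : ℝ} (hl : 0 < l) (hγ : 0 < γ) (hp : 2 < p) (hτ : 0 ≤ τ)
    {v w : ℝ → ℝ → ℝ}
    (hvc : ContinuousOn (fun q : ℝ × ℝ => v q.1 q.2) (Icc (-l) l ×ˢ Icc 0 τ))
    (hwc : ContinuousOn (fun q : ℝ × ℝ => w q.1 q.2) (Icc (-l) l ×ˢ Icc 0 τ))
    (hvpos : ∀ x ∈ Icc (-l) l, ∀ t ∈ Icc 0 τ, 0 < v x t)
    (hwpos : ∀ x ∈ Icc (-l) l, ∀ t ∈ Icc 0 τ, 0 < w x t)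
    (h0 : ∀ x ∈ Icc (-l) l, w x 0 ≤ v x 0)
    (hv2 : ∀ x ∈ Ioo (-l) l, ∀ t ∈ Ioc 0 τ, ContDiffAt ℝ 2 (fun y => v y t) x)
    (hw2 : ∀ x ∈ Ioo (-l) l, ∀ t ∈ Ioc 0 τ, ContDiffAt ℝ 2 (fun y => w y t) x)
    (hvt : ∀ x ∈ Ioo (-l) l, ∀ t ∈ Ioc 0 τ, DifferentiableAt ℝ (v x) t)
    (hwt : ∀ x ∈ Ioo (-l) l, ∀ t ∈ Ioc 0 τ, DifferentiableAt ℝ (w x) t)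
    (hv : ∀ x ∈ Ioo (-l) l, ∀ t ∈ Ioc 0 τ,
      deriv (deriv (fun y => Real.log (v y t))) x ≤ deriv (v x) t)
    (hw : ∀ x ∈ Ioo (-l) l, ∀ t ∈ Ioc 0 τ,
      deriv (w x) t ≤ deriv (deriv (fun y => Real.log (w y t))) x)
    (hC : ∀ x ∈ Ioo (-l) l, ∀ t ∈ Ioc 0 τ, |deriv (w x) t| ≤ C)
    (hvr : ∀ t ∈ Ioc 0 τ,
      HasDerivAt (fun y => Real.log (v y t)) (2 * γ * v l t ^ (p - 1)) l)
    (hwr : ∀ t ∈ Ioc 0 τ,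
      HasDerivAt (fun y => Real.log (w y t)) (2 * γ * w l t ^ (p - 1)) l)
    (hvl : ∀ t ∈ Ioc 0 τ,
      HasDerivAt (fun y => Real.log (v y t)) (-(2 * γ * v (-l) t ^ (p - 1))) (-l))
    (hwl : ∀ t ∈ Ioc 0 τ,
      HasDerivAt (fun y => Real.log (w y t)) (-(2 * γ * w (-l) t ^ (p - 1))) (-l)) :
    ∀ x ∈ Icc (-l) l, ∀ t ∈ Icc 0 τ, w x t ≤ v x t := by
  have hcpt : IsCompact (Icc (-l) l ×ˢ Icc 0 τ) := isCompact_Icc.prod isCompact_Icc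
  obtain ⟨⟨x₀, t₀⟩, ⟨hx₀, ht₀⟩, hmin⟩ := hcpt.exists_isMinOn
    ⟨((0 : ℝ), (0 : ℝ)), ⟨⟨by linarith, hl.le⟩, ⟨le_rfl, hτ⟩⟩⟩ hvc
  obtain ⟨M, hM⟩ := hcpt.exists_bound_of_continuousOn hwc
  have hwM : ∀ x ∈ Icc (-l) l, ∀ t ∈ Icc 0 τ, w x t ≤ M := fun x hx t ht =>
    (le_abs_self _).trans (hM (x, t) ⟨hx, ht⟩)
  -- tangent-line bound for `s ↦ exp ((p - 1) s)`, linearising the boundary condition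
  have hbdry : ∀ x ∈ Icc (-l) l, ∀ t ∈ Icc 0 τ, Real.log (v x t) - Real.log (w x t) < 0 →
      2 * γ * (p - 1) * M ^ (p - 1) * (Real.log (v x t) - Real.log (w x t)) ≤
        2 * γ * v x t ^ (p - 1) - 2 * γ * w x t ^ (p - 1) := by
    intro x hx t ht hneg
    have hvp := hvpos x hx t ht
    have hwp := hwpos x hx t ht
    set δ := Real.log (v x t) - Real.log (w x t) with hδ
    have h1 : v x t ^ (p - 1) = w x t ^ (p - 1) * Real.exp (δ * (p - 1)) := by
      rw [Real.rpow_def_of_pos hvp, Real.rpow_def_of_pos hwp, ← Real.exp_add]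
      congr 1
      rw [hδ]; ring
    have h2 := Real.add_one_le_exp (δ * (p - 1))
    have h3 : w x t ^ (p - 1) ≤ M ^ (p - 1) :=
      Real.rpow_le_rpow hwp.le (hwM x hx t ht) (by linarith)
    have h4 : 0 < w x t ^ (p - 1) := Real.rpow_pos_of_pos hwp _
    have h5 : w x t ^ (p - 1) * (δ * (p - 1) + 1) ≤ w x t ^ (p - 1) * Real.exp (δ * (p - 1)) :=
      mul_le_mul_of_nonneg_left h2 h4.le
    have h6 : M ^ (p - 1) * (δ * (p - 1)) ≤ w x t ^ (p - 1) * (δ * (p - 1)) :=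
      mul_le_mul_of_nonpos_right h3 (mul_nonpos_of_nonpos_of_nonneg hneg.le (by linarith))
    have h7 : 2 * γ * (M ^ (p - 1) * (δ * (p - 1))) ≤
        2 * γ * (w x t ^ (p - 1) * Real.exp (δ * (p - 1)) - w x t ^ (p - 1)) :=
      mul_le_mul_of_nonneg_left (by linarith) (by linarith)
    rw [h1]
    linarith
  have key := robin_max_principle (l := l) (τ := τ) (a₀ := v x₀ t₀)
    (B := 2 * γ * (p - 1) * M ^ (p - 1)) (C := C)
    (d := fun x t => Real.log (v x t) - Real.log (w x t)) (a := v) hl hτ (hvpos x₀ hx₀ t₀ ht₀)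
    ?_ ?_ ?_ ?_ ?_
  · intro x hx t ht
    have := key x hx t ht
    exact (Real.log_le_log_iff (hwpos x hx t ht) (hvpos x hx t ht)).1 (by linarith)
  · exact (hvc.log fun q hq => (hvpos _ hq.1 _ hq.2).ne').sub
      (hwc.log fun q hq => (hwpos _ hq.1 _ hq.2).ne')
  · intro x hx
    have := Real.log_le_log (hwpos x hx 0 ⟨le_rfl, hτ⟩) (h0 x hx)
    linarith
  · intro x hx t ht hneg
    have hx' := Ioo_subset_Icc_self hx
    have ht' := Ioc_subset_Icc_self ht
    have hvp := hvpos x hx' t ht'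
    have hwp := hwpos x hx' t ht'
    have hlv := (hv2 x hx t ht).log hvp.ne'
    have hlw := (hw2 x hx t ht).log hwp.ne'
    have hdt := (((hvt x hx t ht).hasDerivAt.log hvp.ne').sub
      ((hwt x hx t ht).hasDerivAt.log hwp.ne'))
    refine ⟨hlv.sub hlw, hdt.differentiableAt, hmin (show (x, t) ∈ _ from ⟨hx', ht'⟩), ?_⟩
    have hev : deriv (fun y => Real.log (v y t) - Real.log (w y t)) =ᶠ[nhds x]
        deriv (fun y => Real.log (v y t)) - deriv (fun y => Real.log (w y t)) := by
      filter_upwards [hlv.eventually (by simp), hlw.eventually (by simp)] with y hy hy'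
      exact deriv_sub (hy.differentiableAt (by simp)) (hy'.differentiableAt (by simp))
    rw [hev.deriv_eq, deriv_sub
      ((hlv.derivWithin (m := 1) (by norm_num)).differentiableAt (by simp))
      ((hlw.derivWithin (m := 1) (by norm_num)).differentiableAt (by simp))]
    have hdt' : deriv (fun s => Real.log (v x s) - Real.log (w x s)) t =
        deriv (v x) t / v x t - deriv (w x) t / w x t := hdt.deriv
    rw [hdt']
    have h1 := hv x hx t ht
    have h2 := hw x hx t ht
    have h3 := hC x hx t ht
    set δ := Real.log (v x t) - Real.log (w x t) with hδ
    have hexp : v x t / w x t = Real.exp δ := by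
      rw [hδ, Real.exp_sub, Real.exp_log hvp, Real.exp_log hwp]
    have h4 : v x t * (deriv (v x) t / v x t - deriv (w x) t / w x t) =
        deriv (v x) t - deriv (w x) t * Real.exp δ := by
      rw [← hexp]; field_simp
    rw [h4]
    have h5 : deriv (w x) t * (Real.exp δ - 1) ≤ C * -δ := by
      refine (le_abs_self _).trans ?_
      rw [abs_mul]
      refine mul_le_mul h3 ?_ (abs_nonneg _) ((abs_nonneg _).trans h3)
      rw [abs_of_nonpos (by linarith [Real.exp_le_one_iff.2 hneg.le])]
      linarith [Real.add_one_le_exp δ]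
    linarith
  · intro t ht hneg
    exact ⟨_, (hvr t ht).sub (hwr t ht),
      hbdry l ⟨by linarith, le_rfl⟩ t (Ioc_subset_Icc_self ht) hneg⟩
  · intro t ht hneg
    refine ⟨_, (hvl t ht).sub (hwl t ht), ?_⟩
    have := hbdry (-l) ⟨le_rfl, by linarith⟩ t (Ioc_subset_Icc_self ht) hneg
    linarith

/-! ### Regularity of a solution -/

lemma hasDerivAt_log_of_deriv_ne_zero {f : ℝ → ℝ} {x c p : ℝ} (hpos : 0 < f x) (hc : c ≠ 0)
    (h : deriv f x = c * f x ^ p) :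
    HasDerivAt (fun y => Real.log (f y)) (c * f x ^ (p - 1)) x := by
  have hne : deriv f x ≠ 0 := by
    rw [h]; exact mul_ne_zero hc (Real.rpow_pos_of_pos hpos _).ne'
  have hd := (differentiableAt_of_deriv_ne_zero hne).hasDerivAt.log hpos.ne'
  refine hd.congr_deriv ?_
  rw [h, Real.rpow_sub_one hpos.ne']
  ring

namespace IsLogDiffSol

variable {l γ p T : ℝ} {u₀ : ℝ → ℝ} {u : ℝ → ℝ → ℝ}

lemma slice (hu : IsLogDiffSol l γ p T u₀ u) {t : ℝ} (ht : t ∈ Ico 0 T) :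
    ContDiffOn ℝ 2 (fun y => u y t) (Icc (-l) l) :=
  hu.1.comp (f := fun y : ℝ => (y, t)) (by fun_prop) (fun _ hy => ⟨hy, ht⟩)

lemma slice_contDiffAt (hu : IsLogDiffSol l γ p T u₀ u) {x t : ℝ} (hx : x ∈ Ioo (-l) l)
    (ht : t ∈ Ico 0 T) : ContDiffAt ℝ 2 (fun y => u y t) x :=
  (hu.slice ht).contDiffAt (Icc_mem_nhds hx.1 hx.2)

/-- The time derivative extends continuously to the whole of `[-l,l] × [0,T)`. -/
lemma exists_timeDeriv (hu : IsLogDiffSol l γ p T u₀ u) (hl : 0 < l) :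
    ∃ D : ℝ × ℝ → ℝ, ContinuousOn D (Icc (-l) l ×ˢ Ico 0 T) ∧
      ∀ x ∈ Icc (-l) l, ∀ t ∈ Ioo 0 T, HasDerivAt (u x) (D (x, t)) t := by
  by_cases hT : 0 < T
  · have hud : UniqueDiffOn ℝ (Icc (-l) l ×ˢ Ico 0 T) :=
      (uniqueDiffOn_Icc (by linarith)).prod (uniqueDiffOn_Ico 0 T)
    refine ⟨fun q => fderivWithin ℝ (fun q : ℝ × ℝ => u q.1 q.2) (Icc (-l) l ×ˢ Ico 0 T) q (0, 1),
      (hu.1.continuousOn_fderivWithin hud (by norm_num)).clm_apply continuousOn_const, ?_⟩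
    intro x hx t ht
    have h1 := ((hu.1.differentiableOn (by norm_num)) (x, t)
      ⟨hx, Ioo_subset_Ico_self ht⟩).hasFDerivWithinAt
    have h2 : HasDerivWithinAt (fun s : ℝ => (x, s)) ((0 : ℝ), (1 : ℝ)) (Ico 0 T) t :=
      ((hasDerivAt_const t x).prodMk (hasDerivAt_id t)).hasDerivWithinAt
    have h3 := HasFDerivWithinAt.comp_hasDerivWithinAt t h1 h2 (fun s hs => ⟨hx, hs⟩)
    exact h3.hasDerivAt (Ico_mem_nhds ht.1 ht.2)
  · exact ⟨0, continuousOn_const, fun x _ t ht => absurd (ht.1.trans ht.2) hT⟩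

lemma log_right (hu : IsLogDiffSol l γ p T u₀ u) (hl : 0 < l) (hγ : 0 < γ) {t : ℝ}
    (ht : t ∈ Ioo 0 T) :
    HasDerivAt (fun y => Real.log (u y t)) (2 * γ * u l t ^ (p - 1)) l :=
  hasDerivAt_log_of_deriv_ne_zero (f := fun y => u y t)
    (hu.2.1 l ⟨by linarith, le_rfl⟩ t (Ioo_subset_Ico_self ht)) (by positivity)
    (hu.2.2.2.1 t ht)

lemma log_left (hu : IsLogDiffSol l γ p T u₀ u) (hl : 0 < l) (hγ : 0 < γ) {t : ℝ}
    (ht : t ∈ Ioo 0 T) :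
    HasDerivAt (fun y => Real.log (u y t)) (-(2 * γ * u (-l) t ^ (p - 1))) (-l) := by
  have := hasDerivAt_log_of_deriv_ne_zero (f := fun y => u y t) (x := -l) (c := -(2 * γ)) (p := p)
    (hu.2.1 (-l) ⟨le_rfl, by linarith⟩ t (Ioo_subset_Ico_self ht))
    (neg_ne_zero.2 (by positivity)) (by rw [hu.2.2.2.2.1 t ht]; ring)
  exact this.congr_deriv (by ring)

/-! ### Monotonicity in time and convexity of `log u` -/

/-- The initial datum is a stationary subsolution, so the solution stays above it. -/
lemma initial_le (hu : IsLogDiffSol l γ p T u₀ u) (hl : 0 < l) (hγ : 0 < γ) (hp : 2 < p)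
    (hu₀smooth : ContDiffOn ℝ (⊤ : ℕ∞) u₀ (Icc (-l) l))
    (hu₀pos : ∀ x ∈ Icc (-l) l, 0 < u₀ x)
    (hconvex : ∀ x ∈ Icc (-l) l, 0 < deriv (deriv (fun y => Real.log (u₀ y))) x)
    (hcompat : CompatCond l γ p u₀) {x t : ℝ} (hx : x ∈ Icc (-l) l) (ht : t ∈ Ico 0 T) :
    u₀ x ≤ u x t := by
  obtain ⟨D, -, hD⟩ := hu.exists_timeDeriv hl
  have hsub : Icc (-l) l ×ˢ Icc 0 t ⊆ Icc (-l) l ×ˢ Ico 0 T :=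
    prod_mono le_rfl (fun s hs => ⟨hs.1, hs.2.trans_lt ht.2⟩)
  have hIoo : ∀ s ∈ Ioc 0 t, s ∈ Ioo 0 T := fun s hs => ⟨hs.1, hs.2.trans_lt ht.2⟩
  have hIco : ∀ s ∈ Icc 0 t, s ∈ Ico 0 T := fun s hs => ⟨hs.1, hs.2.trans_lt ht.2⟩
  have hr : HasDerivAt (fun y => Real.log (u₀ y)) (2 * γ * u₀ l ^ (p - 1)) l := by
    have hpos := Real.rpow_pos_of_pos (hu₀pos l ⟨by linarith, le_rfl⟩) (p - 1)
    rw [← hcompat.1]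
    refine (differentiableAt_of_deriv_ne_zero ?_).hasDerivAt
    rw [hcompat.1]; positivity
  have hlft : HasDerivAt (fun y => Real.log (u₀ y)) (-(2 * γ * u₀ (-l) ^ (p - 1))) (-l) := by
    have hpos := Real.rpow_pos_of_pos (hu₀pos (-l) ⟨le_rfl, by linarith⟩) (p - 1)
    rw [← hcompat.2]
    refine (differentiableAt_of_deriv_ne_zero ?_).hasDerivAt
    rw [hcompat.2]; exact neg_ne_zero.2 (by positivity)
  refine logDiff_comparison (C := 0) (v := u) (w := fun x _ => u₀ x) hl hγ hp ht.1
    (hu.1.continuousOn.mono hsub)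
    (hu₀smooth.continuousOn.comp continuousOn_fst fun q hq => hq.1)
    (fun x hx s hs => hu.2.1 x hx s (hIco s hs)) (fun x hx _ _ => hu₀pos x hx)
    (fun x hx => (hu.2.2.2.2.2 x hx).ge)
    (fun x hx s hs => hu.slice_contDiffAt hx (Ioo_subset_Ico_self (hIoo s hs)))
    (fun x hx s hs => (hu₀smooth.contDiffAt (Icc_mem_nhds hx.1 hx.2)).of_le
      (WithTop.coe_le_coe.2 (le_top : (2 : ℕ∞) ≤ ⊤)))
    (fun x hx s hs => (hD x (Ioo_subset_Icc_self hx) s (hIoo s hs)).differentiableAt)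
    (fun x hx s hs => differentiableAt_const _)
    (fun x hx s hs => (hu.2.2.1 x (Ioo_subset_Icc_self hx) s (hIoo s hs)).ge)
    (fun x hx s hs => by simpa using (hconvex x (Ioo_subset_Icc_self hx)).le)
    (fun x hx s hs => by simp)
    (fun s hs => hu.log_right hl hγ (hIoo s hs)) (fun s hs => hr)
    (fun s hs => hu.log_left hl hγ (hIoo s hs)) (fun s hs => hlft) x hx t ⟨ht.1, le_rfl⟩

/-- Comparison of the solution with its own time shifts. -/
lemma monotone_time (hu : IsLogDiffSol l γ p T u₀ u) (hl : 0 < l) (hγ : 0 < γ) (hp : 2 < p)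
    (hinitial : ∀ x ∈ Icc (-l) l, ∀ t ∈ Ico 0 T, u₀ x ≤ u x t) {x : ℝ} (hx : x ∈ Icc (-l) l) :
    MonotoneOn (u x) (Ico 0 T) := by
  intro t ht s hs hts
  obtain ⟨D, hDc, hD⟩ := hu.exists_timeDeriv hl
  set h := s - t with hh
  have hh0 : 0 ≤ h := by linarith
  have hIco : ∀ r ∈ Icc 0 t, r ∈ Ico 0 T := fun r hr => ⟨hr.1, hr.2.trans_lt ht.2⟩
  have hIoo : ∀ r ∈ Ioc 0 t, r ∈ Ioo 0 T := fun r hr => ⟨hr.1, hr.2.trans_lt ht.2⟩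
  have hIco' : ∀ r ∈ Icc 0 t, r + h ∈ Ico 0 T := fun r hr =>
    ⟨by linarith [hr.1], by linarith [hr.2, hs.2]⟩
  have hIoo' : ∀ r ∈ Ioc 0 t, r + h ∈ Ioo 0 T := fun r hr =>
    ⟨by linarith [hr.1], by linarith [hr.2, hs.2]⟩
  have hsub : Icc (-l) l ×ˢ Icc 0 t ⊆ Icc (-l) l ×ˢ Ico 0 T := prod_mono le_rfl hIco
  obtain ⟨C, hC⟩ := (isCompact_Icc.prod isCompact_Icc).exists_bound_of_continuousOn
    (hDc.mono hsub)
  have hshift : ∀ y ∈ Icc (-l) l, ∀ r ∈ Ioc 0 t,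
      HasDerivAt (fun r => u y (r + h)) (D (y, r + h)) r := fun y hy r hr =>
    (hD y hy (r + h) (hIoo' r hr)).comp_add_const r h
  have := logDiff_comparison (C := C) (v := fun y r => u y (r + h)) (w := u) hl hγ hp ht.1
    (hu.1.continuousOn.comp (f := fun q : ℝ × ℝ => (q.1, q.2 + h)) (by fun_prop)
      fun q hq => ⟨hq.1, hIco' _ hq.2⟩)
    (hu.1.continuousOn.mono hsub)
    (fun y hy r hr => hu.2.1 y hy _ (hIco' r hr)) (fun y hy r hr => hu.2.1 y hy r (hIco r hr))
    (fun y hy => (hu.2.2.2.2.2 y hy).trans_le (hinitial y hy _ (hIco' 0 ⟨le_rfl, ht.1⟩)))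
    (fun y hy r hr => hu.slice_contDiffAt hy (Ioo_subset_Ico_self (hIoo' r hr)))
    (fun y hy r hr => hu.slice_contDiffAt hy (Ioo_subset_Ico_self (hIoo r hr)))
    (fun y hy r hr => (hshift y (Ioo_subset_Icc_self hy) r hr).differentiableAt)
    (fun y hy r hr => (hD y (Ioo_subset_Icc_self hy) r (hIoo r hr)).differentiableAt)
    (fun y hy r hr => by
      have hy' := Ioo_subset_Icc_self hy
      rw [(hshift y hy' r hr).deriv, ← (hD y hy' _ (hIoo' r hr)).deriv,
        hu.2.2.1 y hy' _ (hIoo' r hr)])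
    (fun y hy r hr => (hu.2.2.1 y (Ioo_subset_Icc_self hy) r (hIoo r hr)).le)
    (fun y hy r hr => by
      have hy' := Ioo_subset_Icc_self hy
      rw [(hD y hy' r (hIoo r hr)).deriv]
      exact hC (y, r) ⟨hy', Ioc_subset_Icc_self hr⟩)
    (fun r hr => hu.log_right hl hγ (hIoo' r hr)) (fun r hr => hu.log_right hl hγ (hIoo r hr))
    (fun r hr => hu.log_left hl hγ (hIoo' r hr)) (fun r hr => hu.log_left hl hγ (hIoo r hr))
    x hx t ⟨ht.1, le_rfl⟩
  simpa [hh] using this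

/-- Since `∂ₓₓ log u = ∂ₜ u ≥ 0`, the spatial maximum sits on the boundary. -/
lemma le_max_boundary (hu : IsLogDiffSol l γ p T u₀ u)
    (hmono : ∀ x ∈ Icc (-l) l, MonotoneOn (u x) (Ico 0 T)) {x t : ℝ} (hx : x ∈ Icc (-l) l)
    (ht : t ∈ Ioo 0 T) : u x t ≤ max (u (-l) t) (u l t) := by
  have ht' := Ioo_subset_Ico_self ht
  have hlog : ∀ y ∈ Ioo (-l) l, ContDiffAt ℝ 2 (fun y => Real.log (u y t)) y := fun y hy =>
    (hu.slice_contDiffAt hy ht').log (hu.2.1 y (Ioo_subset_Icc_self hy) t ht').ne'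
  have hconv : ConvexOn ℝ (Icc (-l) l) (fun y => Real.log (u y t)) := by
    refine convexOn_of_deriv2_nonneg (convex_Icc _ _)
      ((hu.slice ht').continuousOn.log fun y hy => (hu.2.1 y hy t ht').ne') ?_ ?_ ?_ <;>
      rw [interior_Icc]
    · exact fun y hy => ((hlog y hy).differentiableAt (by simp)).differentiableWithinAt
    · exact fun y hy => (((hlog y hy).derivWithin (m := 1) (by norm_num)).differentiableAt
        (by simp)).differentiableWithinAt
    · intro y hy
      have hy' := Ioo_subset_Icc_self hy
      have h1 : 0 ≤ derivWithin (u y) (Ico 0 T) t := (hmono y hy').derivWithin_nonneg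
      rw [derivWithin_of_mem_nhds (Ico_mem_nhds ht.1 ht.2), hu.2.2.1 y hy' t ht] at h1
      exact h1
  have hll : -l ≤ l := hx.1.trans hx.2
  have hL := hu.2.1 (-l) (left_mem_Icc.2 hll) t ht'
  have hR := hu.2.1 l (right_mem_Icc.2 hll) t ht'
  have hX := hu.2.1 x hx t ht'
  rcases le_max_iff.1 (hconv.le_max_of_mem_Icc (left_mem_Icc.2 hll) (right_mem_Icc.2 hll) hx)
    with h | h
  · exact le_max_of_le_left ((Real.log_le_log_iff hX hL).1 h)
  · exact le_max_of_le_right ((Real.log_le_log_iff hX hR).1 h)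

/-! ### Evolution of the mass -/

lemma mass_pos (hu : IsLogDiffSol l γ p T u₀ u) (hl : 0 < l) {t : ℝ} (ht : t ∈ Ico 0 T) :
    0 < ∫ x in (-l)..l, u x t :=
  intervalIntegral.intervalIntegral_pos_of_pos_on
    ((hu.slice ht).continuousOn.intervalIntegrable_of_Icc (by linarith))
    (fun x hx => hu.2.1 x (Ioo_subset_Icc_self hx) t ht) (by linarith)

lemma mass_continuousOn (hu : IsLogDiffSol l γ p T u₀ u) (hl : 0 < l) {τ : ℝ} (hτ : τ < T) :
    ContinuousOn (fun t => ∫ x in (-l)..l, u x t) (Icc 0 τ) := by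
  have hIco : ∀ r ∈ Icc 0 τ, r ∈ Ico 0 T := fun r hr => ⟨hr.1, hr.2.trans_lt hτ⟩
  have hll : -l ≤ l := by linarith
  have hcont : ContinuousOn (fun q : ℝ × ℝ => u q.1 q.2) (Icc (-l) l ×ˢ Icc 0 τ) :=
    hu.1.continuousOn.mono (prod_mono le_rfl hIco)
  obtain ⟨M, hM⟩ := (isCompact_Icc.prod isCompact_Icc).exists_bound_of_continuousOn hcont
  intro t ht
  refine intervalIntegral.continuousWithinAt_of_dominated_interval (bound := fun _ => M)
    ?_ ?_ intervalIntegrable_const ?_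
  · filter_upwards [self_mem_nhdsWithin] with r hr
    rw [uIoc_of_le hll]
    exact ((hu.slice (hIco r hr)).continuousOn.mono Ioc_subset_Icc_self).aestronglyMeasurable
      measurableSet_Ioc
  · filter_upwards [self_mem_nhdsWithin] with r hr
    refine Filter.Eventually.of_forall fun x hx => ?_
    rw [uIoc_of_le hll] at hx
    exact hM (x, r) ⟨Ioc_subset_Icc_self hx, hr⟩
  · refine Filter.Eventually.of_forall fun x hx => ?_
    rw [uIoc_of_le hll] at hx
    exact hcont.comp (f := fun r : ℝ => (x, r)) (s := Icc 0 τ) (by fun_prop)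
      (fun r hr => ⟨Ioc_subset_Icc_self hx, hr⟩) t ht

/-- The mass changes only through the boundary flux of `log u`. -/
lemma mass_hasDerivAt (hu : IsLogDiffSol l γ p T u₀ u) (hl : 0 < l) (hγ : 0 < γ) {t : ℝ}
    (ht : t ∈ Ioo 0 T) :
    HasDerivAt (fun t => ∫ x in (-l)..l, u x t)
      (2 * γ * (u l t ^ (p - 1) + u (-l) t ^ (p - 1))) t := by
  obtain ⟨D, hDc, hD⟩ := hu.exists_timeDeriv hl
  have hll : -l < l := by linarith
  have ht' := Ioo_subset_Ico_self ht
  set K := Icc (t / 2) ((t + T) / 2) with hK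
  have hKsub : K ⊆ Ioo 0 T := fun r hr => ⟨by linarith [hr.1, ht.1], by linarith [hr.2, ht.2]⟩
  have hKn : K ∈ nhds t := Icc_mem_nhds (by linarith [ht.1]) (by linarith [ht.2])
  obtain ⟨M, hM⟩ := (isCompact_Icc.prod isCompact_Icc).exists_bound_of_continuousOn
    (hDc.mono (prod_mono (le_refl (Icc (-l) l)) (hKsub.trans Ioo_subset_Ico_self)))
  have hDt : ContinuousOn (fun x => D (x, t)) (Icc (-l) l) :=
    hDc.comp (f := fun x : ℝ => (x, t)) (by fun_prop) fun x hx => ⟨hx, ht'⟩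
  have hdiff := (intervalIntegral.hasDerivAt_integral_of_dominated_loc_of_deriv_le
    (μ := MeasureTheory.volume) (a := -l) (b := l) (F := fun t x => u x t)
    (F' := fun t x => D (x, t)) (x₀ := t) (s := K) (bound := fun _ => M) hKn
    (by
      filter_upwards [hKn] with r hr
      rw [uIoc_of_le hll.le]
      exact ((hu.slice (Ioo_subset_Ico_self (hKsub hr))).continuousOn.mono
        Ioc_subset_Icc_self).aestronglyMeasurable measurableSet_Ioc)
    ((hu.slice ht').continuousOn.intervalIntegrable_of_Icc hll.le)
    (by
      rw [uIoc_of_le hll.le]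
      exact (hDt.mono Ioc_subset_Icc_self).aestronglyMeasurable measurableSet_Ioc)
    (Filter.Eventually.of_forall fun x hx r hr => by
      rw [uIoc_of_le hll.le] at hx
      exact hM (x, r) ⟨Ioc_subset_Icc_self hx, hr⟩)
    intervalIntegrable_const
    (Filter.Eventually.of_forall fun x hx r hr => by
      rw [uIoc_of_le hll.le] at hx
      exact hD x (Ioc_subset_Icc_self hx) r (hKsub hr))).2
  refine hdiff.congr_deriv ?_
  have hlog : ContDiffOn ℝ 2 (fun y => Real.log (u y t)) (Icc (-l) l) :=
    (hu.slice ht').log fun y hy => (hu.2.1 y hy t ht').ne'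
  -- `deriv` agrees with the one-sided derivative at `±l`, because the boundary condition forces
  -- two-sided differentiability there; hence it is continuous up to the boundary
  have hdc : ContinuousOn (deriv (fun y => Real.log (u y t))) (Icc (-l) l) := by
    refine (hlog.continuousOn_derivWithin (uniqueDiffOn_Icc hll) (by norm_num)).congr ?_
    intro y hy
    have hdy : DifferentiableAt ℝ (fun y => Real.log (u y t)) y := by
      rcases eq_or_lt_of_le hy.2 with rfl | h2
      · exact (hu.log_right hl hγ ht).differentiableAt
      rcases eq_or_lt_of_le hy.1 with rfl | h1
      · exact (hu.log_left hl hγ ht).differentiableAt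
      exact (hlog.contDiffAt (Icc_mem_nhds h1 h2)).differentiableAt (by norm_num)
    exact (hdy.derivWithin (uniqueDiffOn_Icc hll y hy)).symm
  have hFTC := intervalIntegral.integral_eq_sub_of_hasDerivAt_of_le hll.le hdc
    (f' := fun x => D (x, t)) (fun x hx => by
      have hx' := Ioo_subset_Icc_self hx
      rw [← (hD x hx' t ht).deriv, hu.2.2.1 x hx' t ht]
      exact (((hlog.contDiffAt (Icc_mem_nhds hx.1 hx.2)).derivWithin (m := 1)
        (by norm_num)).differentiableAt (by simp)).hasDerivAt)
    (hDt.intervalIntegrable_of_Icc hll.le)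
  rw [hFTC, (hu.log_right hl hγ ht).deriv, (hu.log_left hl hγ ht).deriv]
  ring

/-- The average of `u` is at most its maximum, which is a boundary value. -/
lemma average_rpow_le (hu : IsLogDiffSol l γ p T u₀ u) (hl : 0 < l) (hp : 2 < p)
    (hmono : ∀ x ∈ Icc (-l) l, MonotoneOn (u x) (Ico 0 T)) {t : ℝ} (ht : t ∈ Ioo 0 T) :
    (∫ x in (-l)..l, u x t) ^ (p - 1) / (2 * l) ^ (p - 1) ≤
      u l t ^ (p - 1) + u (-l) t ^ (p - 1) := by
  have ht' := Ioo_subset_Ico_self ht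
  have hL := hu.2.1 (-l) ⟨le_rfl, by linarith⟩ t ht'
  have hR := hu.2.1 l ⟨by linarith, le_rfl⟩ t ht'
  have hm := hu.mass_pos hl ht'
  set M := max (u (-l) t) (u l t) with hM
  have h1 : ∫ x in (-l)..l, u x t ≤ ∫ _ in (-l)..l, M :=
    intervalIntegral.integral_mono_on (by linarith)
      ((hu.slice ht').continuousOn.intervalIntegrable_of_Icc (by linarith))
      intervalIntegrable_const (fun x hx => hu.le_max_boundary hmono hx ht)
  rw [intervalIntegral.integral_const, smul_eq_mul] at h1
  have h2 : (∫ x in (-l)..l, u x t) / (2 * l) ≤ M := by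
    rw [div_le_iff₀ (by positivity)]
    linarith
  rw [← Real.div_rpow hm.le (by positivity)]
  refine (Real.rpow_le_rpow (by positivity) h2 (by linarith)).trans ?_
  have h3 := Real.rpow_pos_of_pos hL (p - 1)
  have h4 := Real.rpow_pos_of_pos hR (p - 1)
  rcases max_choice (u (-l) t) (u l t) with h | h <;> rw [hM, h] <;> linarith

/-- Integrated form of `(m^{2-p})' ≤ β`. -/
lemma mass_rpow_le (hu : IsLogDiffSol l γ p T u₀ u) (hl : 0 < l) (hγ : 0 < γ) (hp : 2 < p)
    (hmono : ∀ x ∈ Icc (-l) l, MonotoneOn (u x) (Ico 0 T)) {t : ℝ} (ht : t ∈ Ico 0 T) :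
    (∫ x in (-l)..l, u x t) ^ (2 - p) ≤
      (∫ x in (-l)..l, u x 0) ^ (2 - p) + (2 * (2 - p) * γ / (2 * l) ^ (p - 1)) * t := by
  set m : ℝ → ℝ := fun t => ∫ x in (-l)..l, u x t with hm
  set β := 2 * (2 - p) * γ / (2 * l) ^ (p - 1) with hβ
  have hIco : ∀ r ∈ Icc 0 t, r ∈ Ico 0 T := fun r hr => ⟨hr.1, hr.2.trans_lt ht.2⟩
  have hIoo : ∀ r ∈ Ioo 0 t, r ∈ Ioo 0 T := fun r hr => ⟨hr.1, hr.2.trans ht.2⟩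
  have hder : ∀ r ∈ Ioo 0 t, HasDerivAt (fun s => m s ^ (2 - p) - β * s)
      (2 * γ * (u l r ^ (p - 1) + u (-l) r ^ (p - 1)) * (2 - p) * m r ^ (2 - p - 1) - β) r := by
    intro r hr
    have h1 := (hu.mass_hasDerivAt hl hγ (hIoo r hr)).rpow_const (p := 2 - p)
      (Or.inl (hu.mass_pos hl (Ioo_subset_Ico_self (hIoo r hr))).ne')
    exact h1.sub ((hasDerivAt_id r).const_mul β |>.congr_deriv (mul_one β))
  have hanti : AntitoneOn (fun s => m s ^ (2 - p) - β * s) (Icc 0 t) := by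
    refine antitoneOn_of_deriv_nonpos (convex_Icc _ _) ?_ ?_ ?_
    · exact ((hu.mass_continuousOn hl ht.2).rpow_const
        fun r hr => Or.inl (hu.mass_pos hl (hIco r hr)).ne').sub (by fun_prop)
    · rw [interior_Icc]
      exact fun r hr => (hder r hr).differentiableAt.differentiableWithinAt
    · rw [interior_Icc]
      intro r hr
      rw [(hder r hr).deriv]
      have hmr : 0 < m r := hu.mass_pos hl (Ioo_subset_Ico_self (hIoo r hr))
      have h1 := hu.average_rpow_le hl hp hmono (hIoo r hr)
      have h2 : m r ^ (p - 1) * m r ^ (2 - p - 1) = 1 := by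
        rw [← Real.rpow_add hmr, show p - 1 + (2 - p - 1) = 0 by ring, Real.rpow_zero]
      have hl' : 0 < (2 * l) ^ (p - 1) := Real.rpow_pos_of_pos (by positivity) _
      have h3 : 0 < m r ^ (2 - p - 1) := Real.rpow_pos_of_pos hmr _
      have h4 : 1 / (2 * l) ^ (p - 1) ≤
          (u l r ^ (p - 1) + u (-l) r ^ (p - 1)) * m r ^ (2 - p - 1) := by
        refine le_trans (le_of_eq ?_) (mul_le_mul_of_nonneg_right h1 h3.le)
        rw [div_mul_eq_mul_div]
        exact congrArg (· / (2 * l) ^ (p - 1)) h2.symm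
      have h5 : 2 * γ * (2 - p) * ((u l r ^ (p - 1) + u (-l) r ^ (p - 1)) * m r ^ (2 - p - 1)) ≤
          2 * γ * (2 - p) * (1 / (2 * l) ^ (p - 1)) :=
        mul_le_mul_of_nonpos_left h4
          (mul_nonpos_of_nonneg_of_nonpos (by positivity) (by linarith))
      have h6 : 2 * γ * (2 - p) * (1 / (2 * l) ^ (p - 1)) = β := by rw [hβ]; ring
      linarith
  have := hanti (left_mem_Icc.2 ht.1) (right_mem_Icc.2 ht.1) ht.1
  simp only at this
  linarith

end IsLogDiffSol

theorem finite_time_blowup_p_gt_two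
    (l γ p T : ℝ) (hl : 0 < l) (hγ : 0 < γ) (hp : 2 < p) (u₀ : ℝ → ℝ)
    (hu₀smooth : ContDiffOn ℝ (⊤ : ℕ∞) u₀ (Icc (-l) l))
    (hu₀pos : ∀ x ∈ Icc (-l) l, 0 < u₀ x)
    (hconvex : ∀ x ∈ Icc (-l) l, 0 < deriv (deriv (fun y => Real.log (u₀ y))) x)
    (hcompat : CompatCond l γ p u₀)
    (u : ℝ → ℝ → ℝ) (hu : IsLogDiffSol l γ p T u₀ u) :
    (∀ t ∈ Ico (0:ℝ) T,
      1 / ((∫ x in (-l)..l, u₀ x) ^ (2 - p) + (2 * (2 - p) * γ / (2 * l) ^ (p - 1)) * t) ≤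
        (∫ x in (-l)..l, u x t) ^ (p - 2)) ∧
    T ≤ (∫ x in (-l)..l, u₀ x) ^ (2 - p) / (-(2 * (2 - p) * γ / (2 * l) ^ (p - 1))) := by
  have hinitial : ∀ x ∈ Icc (-l) l, ∀ t ∈ Ico 0 T, u₀ x ≤ u x t := fun x hx t ht =>
    hu.initial_le hl hγ hp hu₀smooth hu₀pos hconvex hcompat hx ht
  have hmono : ∀ x ∈ Icc (-l) l, MonotoneOn (u x) (Ico 0 T) := fun x hx =>
    hu.monotone_time hl hγ hp hinitial hx
  have hmass0 : ∫ x in (-l)..l, u x 0 = ∫ x in (-l)..l, u₀ x :=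
    intervalIntegral.integral_congr fun x hx => by
      rw [uIcc_of_le (by linarith)] at hx
      exact hu.2.2.2.2.2 x hx
  have hm₀ : 0 < ∫ x in (-l)..l, u₀ x :=
    intervalIntegral.intervalIntegral_pos_of_pos_on
      (hu₀smooth.continuousOn.intervalIntegrable_of_Icc (by linarith))
      (fun x hx => hu₀pos x (Ioo_subset_Icc_self hx)) (by linarith)
  have hl' : 0 < (2 * l) ^ (p - 1) := Real.rpow_pos_of_pos (by positivity) _
  have hβ : 2 * (2 - p) * γ / (2 * l) ^ (p - 1) < 0 :=
    div_neg_of_neg_of_pos (by nlinarith) hl'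
  set β := 2 * (2 - p) * γ / (2 * l) ^ (p - 1) with hβdef
  have key : ∀ t ∈ Ico 0 T, 0 < (∫ x in (-l)..l, u x t) ^ (2 - p) ∧
      (∫ x in (-l)..l, u x t) ^ (2 - p) ≤ (∫ x in (-l)..l, u₀ x) ^ (2 - p) + β * t := by
    intro t ht
    refine ⟨Real.rpow_pos_of_pos (hu.mass_pos hl ht) _, ?_⟩
    rw [← hmass0]
    exact hu.mass_rpow_le hl hγ hp hmono ht
  constructor
  · intro t ht
    obtain ⟨h1, h2⟩ := key t ht
    refine (one_div_le_one_div_of_le h1 h2).trans (le_of_eq ?_)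
    rw [one_div, ← Real.rpow_neg (hu.mass_pos hl ht).le, neg_sub]
  · by_contra! hT
    have hF := Real.rpow_pos_of_pos hm₀ (2 - p)
    obtain ⟨h1, h2⟩ := key _ ⟨(div_pos hF (neg_pos.2 hβ)).le, hT⟩
    have h3 : β * ((∫ x in (-l)..l, u₀ x) ^ (2 - p) / -β) = -(∫ x in (-l)..l, u₀ x) ^ (2 - p) := by
      rw [div_neg, mul_neg, mul_div_cancel₀ _ hβ.ne]
    linarith
end
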